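/- arXiv:2403.14407 — 3 statements merged into one kernel-verified Lean document; each statement's English description precedes it below -/
import Mathlib

section
/- Let k > 0 and R > 0. Suppose w : [0,1] → ℝ is four times continuously differentiable, T : [0,1] → ℝ is continuous, and they satisfy the ordinary differential equation w''''(z) − 2k² w''(z) + k⁴ w(z) = R k² T(z) for all z ∈ [0,1], together with the no-slip boundary conditions w(0) = w(1) = 0 and w'(0) = w'(1) = 0. Then sup_{z∈[0,1]} |w''(z)| ≤ c₀ R k (∫₀¹ T(z)² dz)^{1/2}, where c₀ := √(2/(7−√41)). -/
open MeasureTheory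

/-- A function vanishing somewhere in `[0,1]` is bounded by the `L¹` norm of its derivative. -/
lemma ve_sup_le (h h' : ℝ → ℝ) (hd : ∀ x, HasDerivAt h (h' x) x) (hc : Continuous h')
    (c z : ℝ) (hcI : c ∈ Set.Icc (0:ℝ) 1) (hz : z ∈ Set.Icc (0:ℝ) 1) (h0 : h c = 0) :
    |h z| ≤ ∫ x in (0:ℝ)..1, |h' x| := by
  have e : ∫ x in c..z, h' x = h z - h c :=
    intervalIntegral.integral_eq_sub_of_hasDerivAt (fun x _ => hd x) (hc.intervalIntegrable _ _)
  have key : ∀ a b : ℝ, 0 ≤ a → a ≤ b → b ≤ 1 →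
      |∫ x in a..b, h' x| ≤ ∫ x in (0:ℝ)..1, |h' x| := by
    intro a b ha hab hb
    refine (intervalIntegral.abs_integral_le_integral_abs hab).trans ?_
    exact intervalIntegral.integral_mono_interval ha hab hb
      (Filter.Eventually.of_forall fun x => abs_nonneg _)
      (hc.abs.intervalIntegrable _ _)
  have e2 : h z = ∫ x in c..z, h' x := by rw [e, h0, sub_zero]
  rw [e2]
  rcases le_total c z with hl | hl
  · exact key c z hcI.1 hl hz.2
  · rw [intervalIntegral.integral_symm, abs_neg]
    exact key z c hz.1 hl hcI.2

/-- On `[0,1]` the `L¹` norm is bounded by the `L²` norm. -/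
lemma ve_l1_le (h : ℝ → ℝ) (hc : Continuous h) (a : ℝ) (ha : 0 ≤ a)
    (hle : ∫ x in (0:ℝ)..1, (h x)^2 ≤ a^2) : ∫ x in (0:ℝ)..1, |h x| ≤ a := by
  set m := ∫ x in (0:ℝ)..1, |h x| with hm
  have h1 : ∫ x in (0:ℝ)..1, (2 * m * |h x| - m^2) ≤ ∫ x in (0:ℝ)..1, (h x)^2 := by
    apply intervalIntegral.integral_mono_on zero_le_one
    · exact Continuous.intervalIntegrable (by fun_prop) _ _
    · exact Continuous.intervalIntegrable (by fun_prop) _ _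
    · intro x _
      nlinarith [sq_nonneg (|h x| - m), sq_abs (h x)]
  rw [intervalIntegral.integral_sub (Continuous.intervalIntegrable (by fun_prop) _ _)
    (Continuous.intervalIntegrable (by fun_prop) _ _), intervalIntegral.integral_const_mul,
    ← hm] at h1
  simp at h1
  apply le_of_sq_le_sq _ ha
  nlinarith

/-- Core estimate, with the derivatives of `w` given explicitly. -/
lemma ve_core (k : ℝ) (hk : 0 < k) (w w1 w2 w3 w4 f : ℝ → ℝ)
    (d0 : ∀ x, HasDerivAt w (w1 x) x) (d1 : ∀ x, HasDerivAt w1 (w2 x) x)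
    (d2 : ∀ x, HasDerivAt w2 (w3 x) x) (d3 : ∀ x, HasDerivAt w3 (w4 x) x)
    (c4 : Continuous w4) (cf : Continuous f)
    (hode : ∀ z ∈ Set.Icc (0:ℝ) 1, w4 z - 2 * k^2 * w2 z + k^4 * w z = f z)
    (h0 : w 0 = 0) (h1 : w 1 = 0) (h10 : w1 0 = 0) (h11 : w1 1 = 0)
    (F : ℝ) (hF : 0 ≤ F) (hFf : ∫ x in (0:ℝ)..1, (f x)^2 = F^2)
    (z : ℝ) (hz : z ∈ Set.Icc (0:ℝ) 1) : (w2 z)^2 ≤ 3 * (F / k)^2 := by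
  have c0 : Continuous w := continuous_iff_continuousAt.2 fun x => (d0 x).continuousAt
  have c1 : Continuous w1 := continuous_iff_continuousAt.2 fun x => (d1 x).continuousAt
  have c2 : Continuous w2 := continuous_iff_continuousAt.2 fun x => (d2 x).continuousAt
  have c3 : Continuous w3 := continuous_iff_continuousAt.2 fun x => (d3 x).continuousAt
  have ii : ∀ g : ℝ → ℝ, Continuous g → IntervalIntegrable g volume 0 1 :=
    fun g hg => hg.intervalIntegrable _ _
  obtain ⟨a, ha, ha0⟩ : ∃ a ∈ Set.Ioo (0:ℝ) 1, w1 a = 0 :=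
    exists_hasDerivAt_eq_zero zero_lt_one c0.continuousOn (by rw [h0, h1]) fun x _ => d0 x
  obtain ⟨b, hb, hb0⟩ : ∃ b ∈ Set.Ioo (0:ℝ) a, w2 b = 0 :=
    exists_hasDerivAt_eq_zero ha.1 c1.continuousOn (by rw [h10, ha0]) fun x _ => d1 x
  obtain ⟨b', hb', hb'0⟩ : ∃ b ∈ Set.Ioo a (1:ℝ), w2 b = 0 :=
    exists_hasDerivAt_eq_zero ha.2 c1.continuousOn (by rw [h11, ha0]) fun x _ => d1 x
  obtain ⟨c, hc, hc0⟩ : ∃ c ∈ Set.Ioo b b', w3 c = 0 :=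
    exists_hasDerivAt_eq_zero (hb.2.trans hb'.1) c2.continuousOn (by rw [hb0, hb'0])
      fun x _ => d2 x
  have hbI : b ∈ Set.Icc (0:ℝ) 1 := ⟨hb.1.le, (hb.2.trans ha.2).le⟩
  have hcI : c ∈ Set.Icc (0:ℝ) 1 := ⟨(hb.1.trans hc.1).le, (hc.2.trans hb'.2).le⟩
  have hE : ∫ x in (0:ℝ)..1, (w4 x * w x - w2 x ^ 2 - 2 * k^2 * w1 x ^ 2
      - 2 * k^2 * (w x * w2 x)) = 0 := by
    have := intervalIntegral.integral_eq_sub_of_hasDerivAt (a := 0) (b := 1)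
      (f := fun x => w3 x * w x - w2 x * w1 x - 2 * k^2 * (w x * w1 x))
      (f' := fun x => w4 x * w x - w2 x ^ 2 - 2 * k^2 * w1 x ^ 2
      - 2 * k^2 * (w x * w2 x))
      (fun x _ => by
        have := (((d3 x).mul (d0 x)).sub ((d2 x).mul (d1 x))).sub
          (((d0 x).mul (d1 x)).const_mul (2 * k^2))
        refine this.congr_deriv ?_
        ring) (ii _ (by fun_prop))
    rw [this]
    simp [h0, h1, h10, h11]
  have hk4 : 0 < k^4 := by positivity
  have sqm : ∀ u v : ℝ, u * v ≤ (4 * k^4)⁻¹ * u^2 + k^4 * v^2 := by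
    intro u v
    have : (4 * k^4)⁻¹ * u^2 + k^4 * v^2 - u * v = (4 * k^4)⁻¹ * (u - 2 * k^4 * v)^2 := by
      field_simp; ring
    have h2 : 0 ≤ (4 * k^4)⁻¹ * (u - 2 * k^4 * v)^2 := by positivity
    linarith
  have sqm2 : ∀ u v : ℝ, u * v ≤ (2 * k^4)⁻¹ * u^2 + k^4 / 2 * v^2 := by
    intro u v
    have : (2 * k^4)⁻¹ * u^2 + k^4 / 2 * v^2 - u * v = (2 * k^4)⁻¹ * (u - k^4 * v)^2 := by
      field_simp; ring
    have h2 : 0 ≤ (2 * k^4)⁻¹ * (u - k^4 * v)^2 := by positivity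
    linarith
  have hD : ∫ x in (0:ℝ)..1, (w2 x)^2 ≤ (F / (2 * k^2))^2 := by
    have hm : ∫ x in (0:ℝ)..1, (w4 x * w x - w2 x ^ 2 - 2 * k^2 * w1 x ^ 2
        - 2 * k^2 * (w x * w2 x)) ≤ ∫ x in (0:ℝ)..1, ((4 * k^4)⁻¹ * f x ^ 2 - w2 x ^ 2) := by
      refine intervalIntegral.integral_mono_on zero_le_one (ii _ (by fun_prop))
        (ii _ (by fun_prop)) fun x hx => ?_
      have e := hode x hx
      have e4 : w4 x = f x + 2 * k^2 * w2 x - k^4 * w x := by linarith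
      rw [e4]
      nlinarith [sqm (f x) (w x), mul_nonneg (sq_nonneg k) (sq_nonneg (w1 x))]
    rw [hE, intervalIntegral.integral_sub (ii _ (by fun_prop)) (ii _ (by fun_prop)),
      intervalIntegral.integral_const_mul, hFf] at hm
    have : (F / (2 * k^2))^2 = (4 * k^4)⁻¹ * F^2 := by field_simp; ring
    linarith
  have hB : ∫ x in (0:ℝ)..1, (w x)^2 ≤ (F / k^4)^2 := by
    have hm : ∫ x in (0:ℝ)..1, (w4 x * w x - w2 x ^ 2 - 2 * k^2 * w1 x ^ 2
        - 2 * k^2 * (w x * w2 x)) ≤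
        ∫ x in (0:ℝ)..1, ((2 * k^4)⁻¹ * f x ^ 2 - k^4 / 2 * w x ^ 2) := by
      refine intervalIntegral.integral_mono_on zero_le_one (ii _ (by fun_prop))
        (ii _ (by fun_prop)) fun x hx => ?_
      have e := hode x hx
      have e4 : w4 x = f x + 2 * k^2 * w2 x - k^4 * w x := by linarith
      rw [e4]
      nlinarith [sqm2 (f x) (w x), mul_nonneg (sq_nonneg k) (sq_nonneg (w1 x)),
        sq_nonneg (w2 x)]
    rw [hE, intervalIntegral.integral_sub (ii _ (by fun_prop)) (ii _ (by fun_prop)),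
      intervalIntegral.integral_const_mul, intervalIntegral.integral_const_mul, hFf] at hm
    have : k^4 / 2 * (F / k^4)^2 = (2 * k^4)⁻¹ * F^2 := by field_simp
    have h3 : k^4 / 2 * (∫ x in (0:ℝ)..1, (w x)^2) ≤ k^4 / 2 * (F / k^4)^2 := by linarith
    exact le_of_mul_le_mul_left h3 (by positivity)
  have l2 := ve_l1_le w2 c2 _ (by positivity) hD
  have l0 := ve_l1_le w c0 _ (by positivity) hB
  have lf := ve_l1_le f cf F hF hFf.le
  have l4 : ∫ x in (0:ℝ)..1, |w4 x| ≤ 3 * F := by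
    have hm : ∫ x in (0:ℝ)..1, |w4 x| ≤
        ∫ x in (0:ℝ)..1, (|f x| + 2 * k^2 * |w2 x| + k^4 * |w x|) := by
      refine intervalIntegral.integral_mono_on zero_le_one (ii _ (by fun_prop))
        (ii _ (by fun_prop)) fun x hx => ?_
      have e4 : w4 x = f x + 2 * k^2 * w2 x + -(k^4 * w x) := by linarith [hode x hx]
      rw [e4]
      refine (abs_add_three _ _ _).trans_eq ?_
      rw [abs_neg, abs_mul (2 * k^2), abs_mul (k^4), abs_of_pos hk4,
        abs_of_pos (by positivity : 0 < 2 * k^2)]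
    rw [intervalIntegral.integral_add (ii _ (by fun_prop)) (ii _ (by fun_prop)),
      intervalIntegral.integral_add (ii _ (by fun_prop)) (ii _ (by fun_prop)),
      intervalIntegral.integral_const_mul, intervalIntegral.integral_const_mul] at hm
    have e1 : 2 * k^2 * (F / (2 * k^2)) = F := by field_simp
    have e2 : k^4 * (F / k^4) = F := by field_simp
    have i1 := mul_le_mul_of_nonneg_left l2 (by positivity : 0 ≤ 2 * k^2)
    have i2 := mul_le_mul_of_nonneg_left l0 hk4.le
    linarith
  have M : ∀ x ∈ Set.Icc (0:ℝ) 1, |w3 x| ≤ 3 * F := fun x hx =>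
    (ve_sup_le w3 w4 d3 c4 c x hcI hx hc0).trans l4
  have hs := ve_sup_le (fun x => w2 x ^ 2) (fun x => 2 * w2 x * w3 x)
    (fun x => by
      refine ((d2 x).pow 2).congr_deriv ?_
      norm_num) (by fun_prop) b z hbI hz (by simp [hb0])
  have hm : ∫ x in (0:ℝ)..1, |2 * w2 x * w3 x| ≤ ∫ x in (0:ℝ)..1, (6 * F) * |w2 x| := by
    refine intervalIntegral.integral_mono_on zero_le_one (ii _ (by fun_prop))
        (ii _ (by fun_prop)) fun x hx => ?_
    rw [abs_mul, abs_mul, abs_of_pos (two_pos : (0:ℝ) < 2)]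
    nlinarith [mul_le_mul_of_nonneg_left (M x hx) (abs_nonneg (w2 x))]
  rw [intervalIntegral.integral_const_mul] at hm
  have i3 := mul_le_mul_of_nonneg_left l2 (by positivity : 0 ≤ 6 * F)
  have e3 : 6 * F * (F / (2 * k^2)) = 3 * (F / k)^2 := by field_simp; ring
  have := le_abs_self (w2 z ^ 2)
  linarith



/-- Velocity estimate of Doering–Constantin (2001) (Lemma 1 of the paper): if
`w'''' - 2k²w'' + k⁴w = Rk²T` on `[0,1]` with no-slip boundary conditions
`w(0) = w(1) = w'(0) = w'(1) = 0`, then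
`sup_{[0,1]} |w''| ≤ c₀ R k ‖T‖₂` with `c₀ = √(2/(7-√41))`. -/
theorem velocity_estimate_no_slip
    (k R : ℝ) (hk : 0 < k) (hR : 0 < R)
    (w T : ℝ → ℝ) (hw : ContDiff ℝ 4 w) (hT : Continuous T)
    (hode : ∀ z ∈ Set.Icc (0:ℝ) 1,
      iteratedDeriv 4 w z - 2 * k^2 * iteratedDeriv 2 w z + k^4 * w z = R * k^2 * T z)
    (hw0 : w 0 = 0) (hw1 : w 1 = 0) (hw'0 : deriv w 0 = 0) (hw'1 : deriv w 1 = 0) :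
    (⨆ z : Set.Icc (0:ℝ) 1, |iteratedDeriv 2 w z.1|) ≤
      Real.sqrt (2 / (7 - Real.sqrt 41)) * R * k *
        (∫ z in (0:ℝ)..1, (T z)^2) ^ ((1:ℝ)/2) := by

  have hd : ∀ n : ℕ, n < 4 → ∀ x, HasDerivAt (iteratedDeriv n w) (iteratedDeriv (n+1) w x) x := by
    intro n hn x
    rw [iteratedDeriv_succ]
    exact ((hw.differentiable_iteratedDeriv n (by exact_mod_cast hn)) x).hasDerivAt
  have d0 := hd 0 (by norm_num)
  have d1 := hd 1 (by norm_num)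
  rw [iteratedDeriv_zero] at d0
  have c4 : Continuous (iteratedDeriv 4 w) := hw.continuous_iteratedDeriv 4 (by norm_num)
  set S := ∫ z in (0:ℝ)..1, (T z)^2 with hS
  have hS0 : 0 ≤ S := intervalIntegral.integral_nonneg zero_le_one fun x _ => sq_nonneg _
  rw [← Real.sqrt_eq_rpow]
  have h41 : Real.sqrt 41 < 7 := by
    rw [Real.sqrt_lt' (by norm_num)]; norm_num
  have h41' : 19 / 3 ≤ Real.sqrt 41 := by
    apply Real.le_sqrt_of_sq_le; norm_num
  have hc3 : 3 ≤ 2 / (7 - Real.sqrt 41) := by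
    rw [le_div_iff₀ (by linarith)]; linarith
  have hFf : ∫ x in (0:ℝ)..1, (R * k^2 * T x)^2 = (R * k^2 * Real.sqrt S)^2 := by
    simp only [mul_pow _ (T _), mul_pow _ (Real.sqrt S)]
    rw [intervalIntegral.integral_const_mul, Real.sq_sqrt hS0]
  have : Nonempty (Set.Icc (0:ℝ) 1) := ⟨⟨0, by simp⟩⟩
  refine ciSup_le fun z => ?_
  have hcore := ve_core k hk w _ _ _ _ (fun x => R * k^2 * T x) d0 d1
    (hd 2 (by norm_num)) (hd 3 (by norm_num)) c4 (by fun_prop) hode hw0 hw1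
    (by simpa [iteratedDeriv_one] using hw'0) (by simpa [iteratedDeriv_one] using hw'1)
    (R * k^2 * Real.sqrt S) (by positivity) hFf z.1 z.2
  apply abs_le_of_sq_le_sq _ (by positivity)
  have e : R * k^2 * Real.sqrt S / k = R * k * Real.sqrt S := by field_simp
  rw [e] at hcore
  refine hcore.trans ?_
  have e2 : (Real.sqrt (2 / (7 - Real.sqrt 41)) * R * k * Real.sqrt S)^2
      = (2 / (7 - Real.sqrt 41)) * (R * k * Real.sqrt S)^2 := by
    rw [mul_assoc, mul_assoc, mul_pow, Real.sq_sqrt (by linarith), ← mul_assoc]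
  rw [e2]
  exact mul_le_mul_of_nonneg_right hc3 (sq_nonneg _)
end

section
/- Let R > 0 and ε ∈ (0, 1/3], set δ := (25^{1/3}/2) ε² and A := δ ε^{1/2}/√2, and suppose δ ≤ ((98/9)(7−√41))^{1/3} R^{−2/3}. Let β ≥ (2/3)δ, and let τ' : (0,1) → ℝ be given by τ'(z) = −(1−A)/δ on (0,δ), τ'(z) = 0 on (δ,1−ε), and τ'(z) = −(A(1−ε)/ε)/z² on (1−ε,1). Then for every k > 0 and all functions w, T : [0,1] → ℝ with w four times continuously differentiable, T continuously differentiable, satisfying w''''(z) − 2k² w''(z) + k⁴ w(z) = R k² T(z) for all z ∈ [0,1], w(0) = w(1) = 0, w'(0) = w'(1) = 0, and T(0) = T(1) = 0, one has ∫₀¹ ( β T'(z)² + β k² T(z)² + τ'(z) w(z) T(z) ) dz ≥ 0. -/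
open MeasureTheory

/-- second-order Taylor bound at a double zero -/
lemma taylor2 (f f1 f2 : ℝ → ℝ) (h1 : ∀ x, HasDerivAt f (f1 x) x)
    (h2 : ∀ x, HasDerivAt f1 (f2 x) x) (hc : Continuous f2) (f0 : f 0 = 0) (f10 : f1 0 = 0)
    (M : ℝ) (hM : ∀ x ∈ Set.Icc (0:ℝ) 1, |f2 x| ≤ M) (z : ℝ) (hz : z ∈ Set.Icc (0:ℝ) 1) :
    |f z| ≤ M * z^2 / 2 := by
  have e : ∫ s in (0:ℝ)..z, (z - s) * f2 s = f z := by
    have := intervalIntegral.integral_eq_sub_of_hasDerivAt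
      (f := fun s => (z - s) * f1 s + f s) (f' := fun s => (z - s) * f2 s) (a := 0) (b := z)
      (fun s _ => by
        have := (((hasDerivAt_const s z).sub (hasDerivAt_id s)).mul (h2 s)).add (h1 s)
        refine this.congr_deriv ?_
        simp) ((by fun_prop : Continuous fun s => (z - s) * f2 s).intervalIntegrable _ _)
    rw [this]; simp [f0, f10]
  have e2 : ∫ s in (0:ℝ)..z, (z - s) * M = M * z^2 / 2 := by
    have := intervalIntegral.integral_eq_sub_of_hasDerivAt
      (f := fun s => -(z - s)^2 / 2 * M) (f' := fun s => (z - s) * M) (a := 0) (b := z)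
      (fun s _ => by
        have := (((((hasDerivAt_const s z).sub (hasDerivAt_id s)).pow 2).neg).div_const 2).mul_const M
        refine this.congr_deriv ?_
        simp) ((by fun_prop : Continuous fun s => (z - s) * M).intervalIntegrable _ _)
    rw [this]; ring
  rw [← e, ← e2, ← Real.norm_eq_abs]
  refine intervalIntegral.norm_integral_le_of_norm_le hz.1 ?_
    ((by fun_prop : Continuous fun s => (z - s) * M).intervalIntegrable _ _)
  refine Filter.Eventually.of_forall fun s hs => ?_
  rw [Real.norm_eq_abs, abs_mul, abs_of_nonneg (by linarith [hs.2])]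
  exact mul_le_mul_of_nonneg_left (hM s ⟨hs.1.le, hs.2.trans hz.2⟩) (by linarith [hs.2])

/-- Cauchy-Schwarz bound at a zero -/
lemma cs1 (T T1 : ℝ → ℝ) (h1 : ∀ x, HasDerivAt T (T1 x) x) (hc : Continuous T1) (T0 : T 0 = 0)
    (z : ℝ) (hz : z ∈ Set.Icc (0:ℝ) 1) :
    (T z)^2 ≤ z * ∫ s in (0:ℝ)..1, (T1 s)^2 := by
  rcases hz.1.eq_or_lt with h | h
  · rw [← h, T0]; simp
  set c := T z / z with hcdef
  have hcz : T z = c * z := by rw [hcdef]; field_simp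
  have i1 : ∀ a b, IntervalIntegrable (fun s => (T1 s)^2) volume a b := fun a b =>
    (by fun_prop : Continuous fun s => (T1 s)^2).intervalIntegrable _ _
  have i2 : ∀ a b, IntervalIntegrable T1 volume a b := fun a b => hc.intervalIntegrable _ _
  have eT : ∫ s in (0:ℝ)..z, T1 s = T z := by
    rw [intervalIntegral.integral_eq_sub_of_hasDerivAt (fun s _ => h1 s) (i2 _ _), T0, sub_zero]
  have h0 : 0 ≤ ∫ s in (0:ℝ)..z, ((T1 s)^2 - (2*c) * T1 s + c^2) :=
    intervalIntegral.integral_nonneg hz.1 fun s _ => by nlinarith [sq_nonneg (T1 s - c)]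
  rw [intervalIntegral.integral_add ((i1 _ _).sub ((i2 _ _).const_mul _)) (by simp),
    intervalIntegral.integral_sub (i1 _ _) ((i2 _ _).const_mul _),
    intervalIntegral.integral_const_mul, eT] at h0
  simp at h0
  have h3 : ∫ s in (0:ℝ)..z, (T1 s)^2 ≤ ∫ s in (0:ℝ)..1, (T1 s)^2 := by
    rw [← intervalIntegral.integral_add_adjacent_intervals (i1 0 z) (i1 z 1)]
    have := intervalIntegral.integral_nonneg (μ := volume) (f := fun s => (T1 s)^2) hz.2
      fun s _ => sq_nonneg _
    linarith
  have : c^2 * z ≤ ∫ s in (0:ℝ)..z, (T1 s)^2 := by rw [hcz] at h0; nlinarith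
  rw [hcz]
  nlinarith

set_option maxHeartbeats 2000000 in
/-- sup bound on the second derivative of w -/
lemma key (R k : ℝ) (hR : 0 < R) (hk : 0 < k) (w w1 w2 w3 w4 T : ℝ → ℝ)
    (h1 : ∀ x, HasDerivAt w (w1 x) x) (h2 : ∀ x, HasDerivAt w1 (w2 x) x)
    (h3 : ∀ x, HasDerivAt w2 (w3 x) x) (h4 : ∀ x, HasDerivAt w3 (w4 x) x)
    (hc : Continuous w4) (hT : Continuous T)
    (ode : ∀ z ∈ Set.Icc (0:ℝ) 1, w4 z - 2 * k^2 * w2 z + k^4 * w z = R * k^2 * T z)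
    (a0 : w 0 = 0) (a1 : w 1 = 0) (b0 : w1 0 = 0) (b1 : w1 1 = 0) :
    ∀ z ∈ Set.Icc (0:ℝ) 1, (w2 z)^2 ≤ R^2 * (∫ s in (0:ℝ)..1, (T s)^2) * (3/4 + 1.44 * k) := by
  have cw : Continuous w := continuous_iff_continuousAt.2 fun x => (h1 x).continuousAt
  have c1 : Continuous w1 := continuous_iff_continuousAt.2 fun x => (h2 x).continuousAt
  have c2 : Continuous w2 := continuous_iff_continuousAt.2 fun x => (h3 x).continuousAt
  have c3 : Continuous w3 := continuous_iff_continuousAt.2 fun x => (h4 x).continuousAt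
  have II : ∀ {f : ℝ → ℝ}, Continuous f → ∀ a b, IntervalIntegrable f volume a b :=
    fun h a b => h.intervalIntegrable a b
  set N := ∫ s in (0:ℝ)..1, (T s)^2 with hN
  set x := ∫ s in (0:ℝ)..1, (w2 s)^2 with hx
  set y := ∫ s in (0:ℝ)..1, (w1 s)^2 with hy
  set u := ∫ s in (0:ℝ)..1, (w s)^2 with hu
  have hy0 : 0 ≤ y := intervalIntegral.integral_nonneg zero_le_one fun s _ => sq_nonneg _
  have hx0 : 0 ≤ x := intervalIntegral.integral_nonneg zero_le_one fun s _ => sq_nonneg _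
  have hu0 : 0 ≤ u := intervalIntegral.integral_nonneg zero_le_one fun s _ => sq_nonneg _
  have hN0 : 0 ≤ N := intervalIntegral.integral_nonneg zero_le_one fun s _ => sq_nonneg _
  -- energy identity
  have en : x + 2 * k^2 * y + k^4 * u = ∫ s in (0:ℝ)..1, R * k^2 * (w s * T s) := by
    have e : ∫ s in (0:ℝ)..1, (R * k^2 * (w s * T s) - ((w2 s)^2 + 2 * k^2 * (w1 s)^2 + k^4 * (w s)^2)) = 0 := by
      have := intervalIntegral.integral_eq_sub_of_hasDerivAt
        (f := fun s => w3 s * w s - w2 s * w1 s - 2 * k^2 * (w1 s * w s))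
        (f' := fun s => R * k^2 * (w s * T s) - ((w2 s)^2 + 2 * k^2 * (w1 s)^2 + k^4 * (w s)^2))
        (a := 0) (b := 1)
        (fun s hs => by
          rw [Set.uIcc_of_le zero_le_one] at hs
          have := (((h4 s).mul (h1 s)).sub ((h3 s).mul (h2 s))).sub
            (((h2 s).mul (h1 s)).const_mul (2 * k^2))
          refine this.congr_deriv ?_
          linear_combination (w s) * ode s hs)
        (II (by fun_prop) _ _)
      rw [this]; simp [a0, a1, b0, b1]
    rw [intervalIntegral.integral_sub (II (by fun_prop) _ _) (II (by fun_prop) _ _),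
      intervalIntegral.integral_add (II (by fun_prop) _ _) (II (by fun_prop) _ _),
      intervalIntegral.integral_add (II (by fun_prop) _ _) (II (by fun_prop) _ _),
      intervalIntegral.integral_const_mul (2 * k^2), intervalIntegral.integral_const_mul (k^4)] at e
    linarith
  have en1 : ∫ s in (0:ℝ)..1, R * k^2 * (w s * T s) ≤ k^4 * u + R^2/4 * N := by
    rw [hu, hN, ← intervalIntegral.integral_const_mul, ← intervalIntegral.integral_const_mul,
      ← intervalIntegral.integral_add (II (by fun_prop) _ _) (II (by fun_prop) _ _)]
    exact intervalIntegral.integral_mono_on zero_le_one (II (by fun_prop) _ _) (II (by fun_prop) _ _)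
      fun s _ => by nlinarith [sq_nonneg (k^2 * w s - R/2 * T s)]
  have en2 : ∫ s in (0:ℝ)..1, R * k^2 * (w s * T s) ≤ k^4/2 * u + R^2/2 * N := by
    rw [hu, hN, ← intervalIntegral.integral_const_mul, ← intervalIntegral.integral_const_mul,
      ← intervalIntegral.integral_add (II (by fun_prop) _ _) (II (by fun_prop) _ _)]
    exact intervalIntegral.integral_mono_on zero_le_one (II (by fun_prop) _ _) (II (by fun_prop) _ _)
      fun s _ => by nlinarith [sq_nonneg (k^2 * w s - R * T s)]
  have hxy : x + 2 * (k^2 * y) ≤ R^2 * N / 4 := by linarith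
  have hk2y : 0 ≤ k^2 * y := by positivity
  have huN : k^4 * u ≤ R^2 * N := by linarith
  have hyN : k^2 * y ≤ R^2 * N / 8 := by linarith
  have hRN : 0 ≤ R^2 * N := by positivity
  -- absolute integrals
  set I1 := ∫ s in (0:ℝ)..1, |R * k^2 * (T s * w1 s)| with hI1
  set I2 := ∫ s in (0:ℝ)..1, |2 * k^4 * (w s * w1 s)| with hI2
  have hI1b : I1 ≤ 0.36 * k * (R^2 * N) := by
    have : I1 ≤ k * R^2/6 * N + 3/2 * k^3 * y := by
      rw [hI1, hy, hN, ← intervalIntegral.integral_const_mul, ← intervalIntegral.integral_const_mul,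
        ← intervalIntegral.integral_add (II (by fun_prop) _ _) (II (by fun_prop) _ _)]
      refine intervalIntegral.integral_mono_on zero_le_one (II (by fun_prop) _ _) (II (by fun_prop) _ _)
        fun s _ => abs_le.2 ⟨?_, ?_⟩
      · nlinarith [mul_nonneg hk.le (sq_nonneg (3 * (k * w1 s) + R * T s))]
      · nlinarith [mul_nonneg hk.le (sq_nonneg (3 * (k * w1 s) - R * T s))]
    nlinarith [mul_le_mul_of_nonneg_left hyN hk.le, mul_nonneg hk.le hRN]
  have hI2b : I2 ≤ 0.72 * k * (R^2 * N) := by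
    have : I2 ≤ k^5/3 * u + 3 * k^3 * y := by
      rw [hI2, hy, hu, ← intervalIntegral.integral_const_mul, ← intervalIntegral.integral_const_mul,
        ← intervalIntegral.integral_add (II (by fun_prop) _ _) (II (by fun_prop) _ _)]
      refine intervalIntegral.integral_mono_on zero_le_one (II (by fun_prop) _ _) (II (by fun_prop) _ _)
        fun s _ => abs_le.2 ⟨?_, ?_⟩
      · nlinarith [mul_nonneg (pow_pos hk 3).le (sq_nonneg (3 * w1 s + k * w s))]
      · nlinarith [mul_nonneg (pow_pos hk 3).le (sq_nonneg (3 * w1 s - k * w s))]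
    nlinarith [mul_le_mul_of_nonneg_left hyN hk.le, mul_le_mul_of_nonneg_left huN hk.le, mul_nonneg hk.le hRN]
  -- generic bound: increments bounded by total absolute integral
  have gen : ∀ f : ℝ → ℝ, Continuous f → ∀ p ∈ Set.Icc (0:ℝ) 1, ∀ q ∈ Set.Icc (0:ℝ) 1,
      |∫ s in p..q, f s| ≤ ∫ s in (0:ℝ)..1, |f s| := by
    intro f hf p hp q hq
    rw [← Real.norm_eq_abs]
    refine (intervalIntegral.norm_integral_le_integral_norm_uIoc).trans ?_
    rw [intervalIntegral.integral_of_le zero_le_one]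
    refine setIntegral_mono_set ((II hf.abs 0 1).1) (Filter.Eventually.of_forall fun s => abs_nonneg _) ?_
    refine Filter.Eventually.of_forall fun s hs => ?_
    have hs : s ∈ Set.uIoc p q := hs
    rw [Set.mem_uIoc] at hs
    show s ∈ Set.Ioc (0:ℝ) 1
    rcases hs with hs | hs
    · exact ⟨hp.1.trans_lt hs.1, hs.2.trans hq.2⟩
    · exact ⟨hq.1.trans_lt hs.1, hs.2.trans hp.2⟩
  have hw2 : ∀ z ∈ Set.Icc (0:ℝ) 1, k^4 * (w z)^2 ≤ I2 := by
    intro z hz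
    have := intervalIntegral.integral_eq_sub_of_hasDerivAt
      (f := fun s => k^4 * (w s)^2) (f' := fun s => 2 * k^4 * (w s * w1 s)) (a := 0) (b := z)
      (fun s _ => by
        have := ((h1 s).pow 2).const_mul (k^4)
        refine this.congr_deriv ?_
        simp; ring) (II (by fun_prop) _ _)
    have h := gen (fun s => 2 * k^4 * (w s * w1 s)) (by fun_prop) 0 (by simp) z hz
    rw [this] at h
    have h5 := (abs_le.1 h).2
    have h6 : k^4 * (w 0)^2 = 0 := by rw [a0]; ring
    linarith
  set E : ℝ → ℝ := fun s => w3 s * w1 s - (w2 s)^2/2 - k^2 * (w1 s)^2 + k^4/2 * (w s)^2 with hE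
  have cE : Continuous E := by rw [hE]; fun_prop
  have hEd : ∀ z ∈ Set.Icc (0:ℝ) 1, ∀ s ∈ Set.Icc (0:ℝ) 1, E s ≤ E z + I1 := by
    intro z hz s hs
    have := intervalIntegral.integral_eq_sub_of_hasDerivAt
      (f := E) (f' := fun s => R * k^2 * (T s * w1 s)) (a := z) (b := s)
      (fun t ht => by
        have ht' : t ∈ Set.Icc (0:ℝ) 1 := Set.uIcc_subset_Icc hz hs ht
        have := ((((h4 t).mul (h2 t)).sub (((h3 t).pow 2).div_const 2)).sub
          (((h2 t).pow 2).const_mul (k^2))).add (((h1 t).pow 2).const_mul (k^4/2))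
        refine this.congr_deriv ?_
        simp
        linear_combination (w1 t) * ode t ht') (II (by fun_prop) _ _)
    have h := gen (fun s => R * k^2 * (T s * w1 s)) (by fun_prop) z hz s hs
    rw [this] at h
    linarith [(abs_le.1 h).2]
  have hEint : ∫ s in (0:ℝ)..1, E s = -(3/2) * x - k^2 * y + k^4/2 * u := by
    have e : ∫ s in (0:ℝ)..1, (w3 s * w1 s + (w2 s)^2) = 0 := by
      have := intervalIntegral.integral_eq_sub_of_hasDerivAt
        (f := fun s => w2 s * w1 s) (f' := fun s => w3 s * w1 s + (w2 s)^2)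
        (a := 0) (b := 1)
        (fun s hs => by
          have := (h3 s).mul (h2 s)
          refine this.congr_deriv ?_
          ring)
        (II (by fun_prop) _ _)
      rw [this]; simp [b0, b1]
    have e' : ∫ s in (0:ℝ)..1, E s = ∫ s in (0:ℝ)..1, ((w3 s * w1 s + (w2 s)^2) - (3/2) * (w2 s)^2 - k^2 * (w1 s)^2 + k^4/2 * (w s)^2) := by
      congr 1; ext s; rw [hE]; ring
    rw [e', intervalIntegral.integral_add (II (by fun_prop) _ _) (II (by fun_prop) _ _),
      intervalIntegral.integral_sub (II (by fun_prop) _ _) (II (by fun_prop) _ _),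
      intervalIntegral.integral_sub (II (by fun_prop) _ _) (II (by fun_prop) _ _), e,
      intervalIntegral.integral_const_mul, intervalIntegral.integral_const_mul,
      intervalIntegral.integral_const_mul]
    ring
  have hEz : ∀ z ∈ Set.Icc (0:ℝ) 1, -(3/2) * x - k^2 * y + k^4/2 * u ≤ E z + I1 := by
    intro z hz
    rw [← hEint]
    have := intervalIntegral.integral_mono_on (μ := volume) zero_le_one (II cE 0 1)
      (II (continuous_const (y := E z + I1)) 0 1) (fun s hs => hEd z hz s hs)
    simpa using this
  have main : ∀ z ∈ Set.Icc (0:ℝ) 1, w3 z * w1 z = 0 → (w2 z)^2 ≤ R^2 * N * (3/4 + 1.44 * k) := by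
    intro z hz h0
    have a := hEz z hz
    have b := hw2 z hz
    simp only [hE, h0] at a
    have : 0 ≤ k^4 * u := by positivity
    have h7 : 0 ≤ k^2 * (w1 z)^2 := by positivity
    have h8 : R^2 * N * (3/4 + 1.44 * k) = 3/4 * (R^2 * N) + 1.44 * (k * (R^2 * N)) := by ring
    rw [h8]
    linarith
  obtain ⟨m, hm, hmax⟩ := isCompact_Icc.exists_isMaxOn (Set.nonempty_Icc.2 (zero_le_one (α := ℝ)))
    (c2.pow 2).continuousOn
  intro z hz
  refine (hmax hz).trans ?_
  show (w2 m)^2 ≤ _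
  rcases hm.1.eq_or_lt with h | h
  · exact main m hm (by rw [← h, b0, mul_zero])
  rcases hm.2.eq_or_lt with h' | h'
  · exact main m hm (by rw [h', b1, mul_zero])
  have hl : IsLocalMax (fun s => (w2 s)^2) m := hmax.isLocalMax (Icc_mem_nhds h h')
  have := hl.hasDerivAt_eq_zero ((h3 m).pow 2)
  simp at this
  rcases this with h0 | h0
  · rw [h0, zero_pow two_ne_zero]; have := hk.le; positivity
  · exact main m hm (by rw [h0, zero_mul])

lemma consts (R ε δ A : ℝ) (hR : 0 < R) (hε : ε ∈ Set.Ioc (0:ℝ) (1/3))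
    (hδdef : δ = (25:ℝ) ^ ((1:ℝ)/3) / 2 * ε^2)
    (hAdef : A = δ * ε ^ ((1:ℝ)/2) / Real.sqrt 2)
    (hδle : δ ≤ ((98/9) * (7 - Real.sqrt 41)) ^ ((1:ℝ)/3) * R ^ (-(2:ℝ)/3)) :
    0 < δ ∧ δ < 1/3 ∧ 0 < A ∧ A < 1 ∧ A * Real.sqrt ε * ε^2 = 2/5 * (δ^2 * Real.sqrt δ) ∧
      R * (Real.sqrt δ)^3 ≤ 2.55 := by
  obtain ⟨h0, h3⟩ := hε
  have hc0 : (0:ℝ) < (25:ℝ) ^ ((1:ℝ)/3) := by positivity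
  have hc3 : ((25:ℝ) ^ ((1:ℝ)/3))^3 = 25 := by
    rw [← Real.rpow_natCast, ← Real.rpow_mul (by norm_num)]; norm_num
  set c := (25:ℝ) ^ ((1:ℝ)/3)
  have hc : c < 3 := by
    by_contra h
    push Not at h
    have := pow_le_pow_left₀ (by norm_num) h 3
    norm_num at this; linarith
  have hδ0 : 0 < δ := by rw [hδdef]; positivity
  have hδ1 : δ < 1/3 := by
    rw [hδdef]
    have : ε^2 ≤ 1/9 := by nlinarith
    nlinarith [sq_nonneg ε]
  rw [← Real.sqrt_eq_rpow] at hAdef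
  set e := Real.sqrt ε with he
  have he0 : 0 < e := Real.sqrt_pos.2 h0
  have he2 : e^2 = ε := Real.sq_sqrt h0.le
  set r := Real.sqrt 2 with hr
  have hr0 : 0 < r := Real.sqrt_pos.2 (by norm_num)
  have hr2 : r^2 = 2 := Real.sq_sqrt (by norm_num)
  set s := Real.sqrt δ with hs
  have hs0 : 0 < s := Real.sqrt_pos.2 hδ0
  have hs2 : s^2 = δ := Real.sq_sqrt hδ0.le
  have hδ3 : δ^3 = 25/8 * ε^6 := by
    rw [hδdef]
    linear_combination (ε^6/8) * hc3
  have hse : 2 * r * s^3 = 5 * e^6 := by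
    have : (2 * r * s^3)^2 = (5 * e^6)^2 := by
      have a : (2 * r * s^3)^2 = 4 * r^2 * (s^2)^3 := by ring
      have b : (5 * e^6)^2 = 25 * (e^2)^6 := by ring
      rw [a, b, hr2, hs2, he2, hδ3]; ring
    exact (sq_eq_sq₀ (by positivity) (by positivity)).1 this
  have hAr : A * r = δ * e := by rw [hAdef]; field_simp
  have hA0 : 0 < A := by rw [hAdef]; positivity
  refine ⟨hδ0, hδ1, hA0, ?_, ?_, ?_⟩
  · have e1 : e < 1 := by nlinarith
    have r1 : 1 < r := by nlinarith
    nlinarith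
  · have h : (A * e * ε^2) * r = (2/5 * (δ^2 * s)) * r := by
      rw [← he2, ← hs2]
      rw [← hs2] at hAr
      linear_combination (e^5) * hAr - (s^2/5) * hse
    exact mul_right_cancel₀ hr0.ne' h
  · have h41 : Real.sqrt 41 < 7 := by rw [Real.sqrt_lt' (by norm_num)]; norm_num
    have h41' : 6.4031 < Real.sqrt 41 := Real.lt_sqrt_of_sq_lt (by norm_num)
    set q := (98/9) * (7 - Real.sqrt 41) with hq
    have hq0 : 0 < q := by rw [hq]; linarith
    have hR3 : (R ^ (-(2:ℝ)/3))^3 * R^2 = 1 := by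
      rw [← Real.rpow_natCast (R ^ (-(2:ℝ)/3)), ← Real.rpow_mul hR.le, ← Real.rpow_natCast R,
        ← Real.rpow_add hR]
      norm_num
    have hq3 : (q ^ ((1:ℝ)/3))^3 = q := by
      rw [← Real.rpow_natCast, ← Real.rpow_mul hq0.le]; norm_num
    have h := pow_le_pow_left₀ hδ0.le hδle 3
    have h2 : δ^3 * R^2 ≤ q := by
      have := mul_le_mul_of_nonneg_right h (sq_nonneg R)
      rw [mul_pow, mul_assoc, hR3, hq3, mul_one] at this
      exact this
    have : (R * s^3)^2 ≤ 2.55^2 := by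
      have a : (R * s^3)^2 = (s^2)^3 * R^2 := by ring
      rw [a, hs2]
      refine h2.trans ?_
      rw [hq]; linarith
    exact abs_le_of_sq_le_sq' this (by norm_num) |>.2

lemma finalIneq (P R Q s A ε δ e β : ℝ) (hR : 0 < R) (hP : 0 ≤ P) (hQ : 0 ≤ Q)
    (hPQ : P ≤ 0.86 * R * Q) (hs : 0 < s) (hsδ : s^2 = δ) (hε0 : 0 < ε) (hε3 : ε ≤ 1/3)
    (hA : A * e * ε^2 = 2/5 * (δ^2 * s)) (hRs : R * s^3 ≤ 2.55) (hβ : β ≥ 2/3 * δ) :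
    1/δ * (P/2 * s) * (δ^3/3) + A/(ε*(1-ε)) * (P/2 * e) * (ε^3/3) ≤ β * Q := by
  have hδ : 0 < δ := by rw [← hsδ]; positivity
  have h1 : 1/δ * (P/2 * s) * (δ^3/3) = P/6 * s^5 := by
    field_simp; rw [← hsδ]; ring
  have hε1 : 0 < 1 - ε := by linarith
  have h2 : A/(ε*(1-ε)) * (P/2 * e) * (ε^3/3) = P/6 * (2/5 * s^5) * (1/(1-ε)) := by
    have : s^5 = δ^2 * s := by rw [← hsδ]; ring
    rw [this, ← hA]; field_simp; ring
  have h3 : 1/(1-ε) ≤ 3/2 := by rw [div_le_iff₀ hε1]; linarith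
  rw [h1, h2]
  have h4 : P/6 * (2/5 * s^5) * (1/(1-ε)) ≤ P/6 * (2/5 * s^5) * (3/2) :=
    mul_le_mul_of_nonneg_left h3 (by positivity)
  have h5 : P * s^5 ≤ 0.86 * R * Q * s^5 := mul_le_mul_of_nonneg_right hPQ (by positivity)
  have h6 : R * s^3 * (Q * s^2) ≤ 2.55 * (Q * s^2) := mul_le_mul_of_nonneg_right hRs (by positivity)
  have h7 : 2/3 * δ * Q ≤ β * Q := mul_le_mul_of_nonneg_right hβ hQ
  rw [← hsδ] at h7
  have h8 : 0 ≤ Q * s^2 := by positivity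
  nlinarith

set_option maxHeartbeats 2000000 in
theorem no_slip_spectral_constraint
    (R ε δ A β : ℝ) (hR : 0 < R) (hε : ε ∈ Set.Ioc (0:ℝ) (1/3))
    (hδdef : δ = (25:ℝ) ^ ((1:ℝ)/3) / 2 * ε^2)
    (hAdef : A = δ * ε ^ ((1:ℝ)/2) / Real.sqrt 2)
    (hδle : δ ≤ ((98/9) * (7 - Real.sqrt 41)) ^ ((1:ℝ)/3) * R ^ (-(2:ℝ)/3))
    (hβ : β ≥ (2/3) * δ)
    (τ' : ℝ → ℝ)
    (hτ1 : ∀ z ∈ Set.Ioo (0:ℝ) δ, τ' z = -(1-A) / δ)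
    (hτ2 : ∀ z ∈ Set.Ioo δ (1-ε), τ' z = 0)
    (hτ3 : ∀ z ∈ Set.Ioo (1-ε) (1:ℝ), τ' z = -(A * (1-ε) / ε) / z^2) :
    ∀ k : ℝ, 0 < k → ∀ w T : ℝ → ℝ, ContDiff ℝ 4 w → ContDiff ℝ 1 T →
      (∀ z ∈ Set.Icc (0:ℝ) 1,
        iteratedDeriv 4 w z - 2 * k^2 * iteratedDeriv 2 w z + k^4 * w z = R * k^2 * T z) →
      w 0 = 0 → w 1 = 0 → deriv w 0 = 0 → deriv w 1 = 0 → T 0 = 0 → T 1 = 0 →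
      0 ≤ ∫ z in (0:ℝ)..1,
        (β * (deriv T z)^2 + β * k^2 * (T z)^2 + τ' z * w z * T z) := by
  intro k hk w T hw hT ode a0 a1 b0 b1 T0 T1
  obtain ⟨hδ0, hδ1, hA0, hA1, hAe, hRs⟩ := consts R ε δ A hR hε hδdef hAdef hδle
  obtain ⟨hε0, hε3⟩ := hε
  clear hδdef hAdef hδle
  have hd : ∀ n : ℕ, n < 4 → ∀ x, HasDerivAt (iteratedDeriv n w) (iteratedDeriv (n+1) w x) x := by
    intro n hn x
    rw [iteratedDeriv_succ]
    exact ((hw.differentiable_iteratedDeriv n (by exact_mod_cast hn)) x).hasDerivAt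
  have d1 : ∀ x, HasDerivAt w (iteratedDeriv 1 w x) x := by simpa using hd 0 (by norm_num)
  have d2 := hd 1 (by norm_num)
  have d3 := hd 2 (by norm_num)
  have d4 := hd 3 (by norm_num)
  rw [← iteratedDeriv_one] at b0 b1
  have cw4 : Continuous (iteratedDeriv 4 w) := hw.continuous_iteratedDeriv 4 le_rfl
  have dT : ∀ x, HasDerivAt T (deriv T x) x := fun x =>
    ((hT.differentiable (by norm_num)) x).hasDerivAt
  have cT1 : Continuous (deriv T) := hT.continuous_deriv le_rfl
  have cT : Continuous T := hT.continuous
  have cw : Continuous w := hw.continuous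
  have c2 : Continuous (iteratedDeriv 2 w) :=
    continuous_iff_continuousAt.2 fun x => (d3 x).continuousAt
  have K := key R k hR hk w _ _ _ _ T d1 d2 d3 d4 cw4 cT ode a0 a1 b0 b1
  set N := ∫ s in (0:ℝ)..1, (T s)^2 with hN
  set a := ∫ s in (0:ℝ)..1, (deriv T s)^2 with ha
  have hN0 : 0 ≤ N := intervalIntegral.integral_nonneg zero_le_one fun s _ => sq_nonneg _
  have ha0 : 0 ≤ a := intervalIntegral.integral_nonneg zero_le_one fun s _ => sq_nonneg _
  have Tl : ∀ z ∈ Set.Icc (0:ℝ) 1, (T z)^2 ≤ z * a := cs1 T _ dT cT1 T0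
  have refl : ∀ z ∈ Set.Icc (0:ℝ) 1, 1 - z ∈ Set.Icc (0:ℝ) 1 :=
    fun z hz => ⟨by linarith [hz.2], by linarith [hz.1]⟩
  have rd : ∀ (f f' : ℝ → ℝ), (∀ x, HasDerivAt f (f' x) x) →
      ∀ x, HasDerivAt (fun x => f (1 - x)) (-(f' (1 - x))) x := by
    intro f f' h x
    have := (h (1 - x)).comp x ((hasDerivAt_id x).const_sub 1)
    refine this.congr_deriv ?_
    ring
  have Tr : ∀ z ∈ Set.Icc (0:ℝ) 1, (T z)^2 ≤ (1 - z) * a := by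
    intro z hz
    have := cs1 (fun x => T (1 - x)) _ (rd T _ dT) (by fun_prop) (by simpa using T1) (1 - z) (refl z hz)
    have e : ∫ s in (0:ℝ)..1, (-(deriv T (1 - s)))^2 = a := by
      have := intervalIntegral.integral_comp_sub_left (a := (0:ℝ)) (b := 1)
        (fun s => (deriv T s)^2) 1
      simpa using this
    rw [e] at this
    simpa using this
  have hNa : N ≤ a / 2 := by
    have : N ≤ ∫ s in (0:ℝ)..1, s * a :=
      intervalIntegral.integral_mono_on zero_le_one
        ((by fun_prop : Continuous fun s => (T s)^2).intervalIntegrable _ _)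
        ((by fun_prop : Continuous fun s => s * a).intervalIntegrable _ _) Tl
    rw [intervalIntegral.integral_mul_const, integral_id] at this
    linarith
  set M := Real.sqrt (R^2 * N * (3/4 + 1.44 * k)) with hM
  have hM0 : 0 ≤ M := Real.sqrt_nonneg _
  have hM2 : M^2 = R^2 * N * (3/4 + 1.44 * k) := Real.sq_sqrt (by positivity)
  set α := Real.sqrt a with hα
  have hα0 : 0 ≤ α := Real.sqrt_nonneg _
  have hα2 : α^2 = a := Real.sq_sqrt ha0
  have hw2 : ∀ z ∈ Set.Icc (0:ℝ) 1, |iteratedDeriv 2 w z| ≤ M := fun z hz => Real.abs_le_sqrt (K z hz)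
  have wl : ∀ z ∈ Set.Icc (0:ℝ) 1, |w z| ≤ M * z^2 / 2 :=
    fun z hz => taylor2 w _ _ d1 d2 c2 a0 b0 M hw2 z hz
  have wr : ∀ z ∈ Set.Icc (0:ℝ) 1, |w z| ≤ M * (1-z)^2 / 2 := by
    intro z hz
    have h2 : ∀ x, HasDerivAt (fun x => -(iteratedDeriv 1 w (1 - x))) (iteratedDeriv 2 w (1 - x)) x := by
      intro x
      refine ((rd _ _ d2 x).neg).congr_deriv ?_
      simp
    have := taylor2 (fun x => w (1 - x)) _ _ (rd w _ d1) h2 (by fun_prop) (by simpa using a1)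
      (by simpa using b1) M (fun x hx => hw2 _ (refl x hx)) (1 - z) (refl z hz)
    simpa using this
  set Q := a + k^2 * N with hQ
  have hQ0 : 0 ≤ Q := by positivity
  have hPQ : M * α ≤ 0.86 * R * Q := by
    have : (M * α)^2 ≤ (0.86 * R * Q)^2 := by
      have e1 : (M * α)^2 = R^2 * (N * a * (3/4 + 1.44 * k)) := by rw [mul_pow, hM2, hα2]; ring
      have e2 : (0.86 * R * Q)^2 = R^2 * (0.86 * Q)^2 := by ring
      rw [e1, e2]
      refine mul_le_mul_of_nonneg_left ?_ (sq_nonneg R)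
      have h1 : N * a * (3/4 + 1.44 * k) ≤ N * a * (3/4 + 0.72 * (1 + k^2)) :=
        mul_le_mul_of_nonneg_left (by nlinarith [sq_nonneg (k-1)]) (by positivity)
      have h2 : N * a ≤ a/2 * a := mul_le_mul_of_nonneg_right hNa ha0
      have h3 : 0 ≤ a * (k^2 * N) := by positivity
      have h4 : 0 ≤ (k^2 * N)^2 := by positivity
      rw [hQ]
      nlinarith
    exact abs_le_of_sq_le_sq' this (by positivity) |>.2
  have hs0 : 0 < Real.sqrt δ := Real.sqrt_pos.2 hδ0
  have fin := finalIneq (M * α) R Q (Real.sqrt δ) A ε δ (Real.sqrt ε) β hR (by positivity) hQ0 hPQ hs0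
    (Real.sq_sqrt hδ0.le) hε0 hε3 hAe hRs hβ
  by_cases hF : IntervalIntegrable (fun z => τ' z * w z * T z) volume 0 1
  swap
  · rw [intervalIntegral.integral_undef]
    intro h
    apply hF
    have := h.sub ((by fun_prop : Continuous fun z =>
      β * (deriv T z)^2 + β * k^2 * (T z)^2).intervalIntegrable 0 1)
    simpa using this
  have II : ∀ {f : ℝ → ℝ}, Continuous f → ∀ a b, IntervalIntegrable f volume a b :=
    fun h a b => h.intervalIntegrable a b
  rw [intervalIntegral.integral_add (II (by fun_prop) _ _) hF,
    intervalIntegral.integral_add (II (by fun_prop) _ _) (II (by fun_prop) _ _),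
    intervalIntegral.integral_const_mul, intervalIntegral.integral_const_mul, ← hN, ← ha]
  have F1 : IntervalIntegrable (fun z => τ' z * w z * T z) volume 0 δ :=
    hF.mono_set (Set.uIcc_subset_uIcc (by simp) (Set.mem_uIcc_of_le hδ0.le (by linarith)))
  have F2 : IntervalIntegrable (fun z => τ' z * w z * T z) volume δ (1-ε) :=
    hF.mono_set (Set.uIcc_subset_uIcc (Set.mem_uIcc_of_le hδ0.le (by linarith))
      (Set.mem_uIcc_of_le (by linarith) (by linarith)))
  have F3 : IntervalIntegrable (fun z => τ' z * w z * T z) volume (1-ε) 1 :=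
    hF.mono_set (Set.uIcc_subset_uIcc (Set.mem_uIcc_of_le (by linarith) (by linarith)) (by simp))
  rw [← intervalIntegral.integral_add_adjacent_intervals (F1.trans F2) F3,
    ← intervalIntegral.integral_add_adjacent_intervals F1 F2]
  have J2 : ∫ z in δ..(1-ε), τ' z * w z * T z = 0 := by
    rw [intervalIntegral.integral_of_le (by linarith), integral_Ioc_eq_integral_Ioo]
    refine setIntegral_eq_zero_of_forall_eq_zero fun z hz => ?_
    rw [hτ2 z hz]; ring
  have J1 : -(1/δ * (M * α/2 * Real.sqrt δ) * (δ^3/3)) ≤ ∫ z in (0:ℝ)..δ, τ' z * w z * T z := by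
    have e : ∫ z in (0:ℝ)..δ, (-(1/δ * (M * α/2 * Real.sqrt δ))) * z^2
        = -(1/δ * (M * α/2 * Real.sqrt δ) * (δ^3/3)) := by
      rw [intervalIntegral.integral_const_mul, integral_pow]; norm_num
    rw [← e]
    refine intervalIntegral.integral_mono_on_of_le_Ioo hδ0.le (II (by fun_prop) _ _) F1 fun z hz => ?_
    have hz1 : z ∈ Set.Icc (0:ℝ) 1 := ⟨hz.1.le, by linarith [hz.2]⟩
    have hTz : |T z| ≤ Real.sqrt δ * α := by
      rw [hα, ← Real.sqrt_mul hδ0.le]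
      exact Real.abs_le_sqrt ((Tl z hz1).trans (mul_le_mul_of_nonneg_right hz.2.le ha0))
    have hτ : |τ' z| ≤ 1/δ := by
      rw [hτ1 z hz, abs_div, abs_neg, abs_of_pos (by linarith : 0 < 1 - A), abs_of_pos hδ0]
      exact div_le_div_of_nonneg_right (by linarith) hδ0.le
    have : |τ' z * w z * T z| ≤ 1/δ * (M * z^2/2) * (Real.sqrt δ * α) := by
      rw [abs_mul, abs_mul]
      have := wl z hz1
      gcongr
    refine le_trans (le_of_eq ?_) (abs_le.1 this).1
    ring
  have J3 : -(A/(ε*(1-ε)) * (M * α/2 * Real.sqrt ε) * (ε^3/3)) ≤ ∫ z in (1-ε)..1, τ' z * w z * T z := by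
    have e : ∫ z in (1-ε)..1, (-(A/(ε*(1-ε)) * (M * α/2 * Real.sqrt ε))) * (1-z)^2
        = -(A/(ε*(1-ε)) * (M * α/2 * Real.sqrt ε) * (ε^3/3)) := by
      rw [intervalIntegral.integral_const_mul,
        intervalIntegral.integral_comp_sub_left (fun z => z^2), integral_pow]
      norm_num
    rw [← e]
    refine intervalIntegral.integral_mono_on_of_le_Ioo (by linarith) (II (by fun_prop) _ _) F3 fun z hz => ?_
    have hz1 : z ∈ Set.Icc (0:ℝ) 1 := ⟨by linarith [hz.1], hz.2.le⟩
    have hε1 : 0 < 1 - ε := by linarith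
    have hTz : |T z| ≤ Real.sqrt ε * α := by
      rw [hα, ← Real.sqrt_mul hε0.le]
      exact Real.abs_le_sqrt ((Tr z hz1).trans (mul_le_mul_of_nonneg_right (by linarith [hz.1]) ha0))
    have hτ : |τ' z| ≤ A/(ε*(1-ε)) := by
      have hzz : 0 < z := by linarith [hz.1]
      rw [hτ3 z hz, neg_div, abs_neg, abs_of_pos (by positivity)]
      have : A/(ε*(1-ε)) = (A * (1-ε)/ε)/(1-ε)^2 := by field_simp
      rw [this]
      have := hz.1.le
      gcongr
    have : |τ' z * w z * T z| ≤ A/(ε*(1-ε)) * (M * (1-z)^2/2) * (Real.sqrt ε * α) := by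
      rw [abs_mul, abs_mul]
      have := wr z hz1
      gcongr
    refine le_trans (le_of_eq ?_) (abs_le.1 this).1
    ring
  rw [J2]
  have : β * Q = β * a + β * k^2 * N := by rw [hQ]; ring
  linarith
end

section
/- Let R > 0 and ε ∈ (0, 1/3], set δ := (81/100) ε⁴ and A := δ ε^{1/2}/3, and suppose δ ≤ (2⁴⁹ · 5³ / 3³⁰)^{2/29} R^{−40/29}. Let β ≥ 2√2 δ/9, and let τ' : (0,1) → ℝ be given by τ'(z) = −1/δ on (0,δ), τ'(z) = A on (δ,1−ε), and τ'(z) = −(A/ε)(1−ε−δ)(1−ε)/z² on (1−ε,1). Then for every k > 0 and all functions w, T : [0,1] → ℝ with w four times continuously differentiable, T continuously differentiable, satisfying w''''(z) − 2k² w''(z) + k⁴ w(z) = R k² T(z) for all z ∈ [0,1], w(0) = w(1) = 0, w''(0) = w''(1) = 0, and T(0) = T(1) = 0, one has ∫₀¹ ( β T'(z)² + β k² T(z)² + τ'(z) w(z) T(z) ) dz ≥ 0. -/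
open MeasureTheory

namespace SF

lemma ftc {F f : ℝ → ℝ} (h : ∀ z, HasDerivAt F (f z) z) (hf : Continuous f) (a b : ℝ) :
    ∫ z in a..b, f z = F b - F a :=
  intervalIntegral.integral_eq_sub_of_hasDerivAt (fun z _ => h z) (hf.intervalIntegrable a b)

/-- Cauchy-Schwarz on an increment. -/
lemma incr {f f1 : ℝ → ℝ} (h : ∀ z, HasDerivAt f (f1 z) z) (hf : Continuous f1) {a b : ℝ}
    (hab : a ≤ b) : (f b - f a) ^ 2 ≤ (b - a) * ∫ z in a..b, (f1 z) ^ 2 := by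
  rcases hab.eq_or_lt with rfl | hlt
  · simp
  have hd : 0 < b - a := sub_pos.mpr hlt
  set m := (f b - f a) / (b - a) with hm
  have h0 : 0 ≤ ∫ z in a..b, (f1 z - m) ^ 2 :=
    intervalIntegral.integral_nonneg hab (fun z _ => sq_nonneg _)
  have hc : Continuous fun z => f1 z ^ 2 := by fun_prop
  have h1 : ∫ z in a..b, ((f1 z - m) ^ 2 - (f1 z) ^ 2)
      = (m ^ 2 * b - 2 * m * f b) - (m ^ 2 * a - 2 * m * f a) := by
    apply ftc (F := fun z => m ^ 2 * z - 2 * m * f z)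
    · intro z
      exact (((hasDerivAt_id z).const_mul (m ^ 2)).sub ((h z).const_mul (2 * m))).congr_deriv
        (by ring)
    · fun_prop
  rw [intervalIntegral.integral_sub (Continuous.intervalIntegrable (by fun_prop) _ _)
    (hc.intervalIntegrable _ _)] at h1
  have h2 : m * (b - a) = f b - f a := by rw [hm]; field_simp
  set J := ∫ z in a..b, (f1 z) ^ 2
  have h3 : 0 ≤ J - m ^ 2 * (b - a) := by
    have : m ^ 2 * b - 2 * m * f b - (m ^ 2 * a - 2 * m * f a)
      = m ^ 2 * (b - a) - 2 * m * (f b - f a) := by ring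
    rw [this, ← h2] at h1
    nlinarith
  rw [← h2]
  nlinarith

lemma sup_bound {p p1 : ℝ → ℝ} (h : ∀ z, HasDerivAt p (p1 z) z) (hp1 : Continuous p1) {k : ℝ}
    (hk : 0 < k) {z0 : ℝ} (hz0 : z0 ∈ Set.Icc (0:ℝ) 1) (h0 : p z0 = 0) {z : ℝ}
    (hz : z ∈ Set.Icc (0:ℝ) 1) :
    k * (p z) ^ 2 ≤ ∫ z in (0:ℝ)..1, ((p1 z) ^ 2 + k ^ 2 * (p z) ^ 2) := by
  have hp : Continuous p := continuous_iff_continuousAt.mpr fun z => (h z).continuousAt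
  have hH : Continuous fun z => (p1 z) ^ 2 + k ^ 2 * (p z) ^ 2 := by fun_prop
  have hg : Continuous fun z => k * (2 * p z * p1 z) := by fun_prop
  have hd : ∀ z, HasDerivAt (fun z => k * (p z) ^ 2) (k * (2 * p z * p1 z)) z := by
    intro z
    exact (((h z).pow 2).const_mul k).congr_deriv (by norm_num)
  have mono : ∀ a b : ℝ, 0 ≤ a → a ≤ b → b ≤ 1 →
      ∫ z in a..b, ((p1 z) ^ 2 + k ^ 2 * (p z) ^ 2)
        ≤ ∫ z in (0:ℝ)..1, ((p1 z) ^ 2 + k ^ 2 * (p z) ^ 2) := by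
    intro a b ha hab hb
    exact intervalIntegral.integral_mono_interval ha hab hb
      (Filter.Eventually.of_forall fun z => by simp only [Pi.zero_apply]; positivity)
      (hH.intervalIntegrable _ _)
  rcases le_total z0 z with hle | hle
  · refine le_trans ?_ (mono z0 z hz0.1 hle hz.2)
    have e := ftc hd hg z0 z
    simp only [h0] at e
    have : k * (p z) ^ 2 = ∫ z in z0..z, k * (2 * p z * p1 z) := by rw [e]; ring
    rw [this]
    apply intervalIntegral.integral_mono_on hle (hg.intervalIntegrable _ _)
      (hH.intervalIntegrable _ _)
    intro y _
    nlinarith [sq_nonneg (p1 y - k * p y)]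
  · refine le_trans ?_ (mono z z0 hz.1 hle hz0.2)
    have e := ftc hd hg z z0
    simp only [h0] at e
    have : k * (p z) ^ 2 = ∫ z in z..z0, - (k * (2 * p z * p1 z)) := by
      rw [intervalIntegral.integral_neg, e]; ring
    rw [this]
    apply intervalIntegral.integral_mono_on hle (hg.neg.intervalIntegrable _ _)
      (hH.intervalIntegrable _ _)
    intro y _
    simp only [Pi.neg_apply]
    nlinarith [sq_nonneg (p1 y + k * p y)]

lemma energy {R k : ℝ} (hk : 0 < k) {w w1 w2 w3 w4 T : ℝ → ℝ}
    (d1 : ∀ z, HasDerivAt w (w1 z) z) (d2 : ∀ z, HasDerivAt w1 (w2 z) z)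
    (d3 : ∀ z, HasDerivAt w2 (w3 z) z) (d4 : ∀ z, HasDerivAt w3 (w4 z) z)
    (c4 : Continuous w4) (cT : Continuous T)
    (ode : ∀ z ∈ Set.Icc (0:ℝ) 1, w4 z - 2 * k ^ 2 * w2 z + k ^ 4 * w z = R * k ^ 2 * T z)
    (b0 : w 0 = 0) (b1 : w 1 = 0) (e0 : w2 0 = 0) (e1 : w2 1 = 0) :
    ∃ X : ℝ, 0 ≤ X ∧ R * k ^ 2 * ∫ z in (0:ℝ)..1, w z * T z = X ∧
      X ≤ R ^ 2 * ∫ z in (0:ℝ)..1, (T z) ^ 2 ∧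
      ∀ z ∈ Set.Icc (0:ℝ) 1, k * (w1 z) ^ 2 ≤ X := by
  have cc : ∀ {f g : ℝ → ℝ}, (∀ z, HasDerivAt f (g z) z) → Continuous f := fun h =>
    continuous_iff_continuousAt.mpr fun z => (h z).continuousAt
  have c0 := cc d1
  have c1 := cc d2
  have c2 := cc d3
  have c3 := cc d4
  set V : ℝ → ℝ := fun z => w2 z - k ^ 2 * w z with hV
  set V1 : ℝ → ℝ := fun z => w3 z - k ^ 2 * w1 z with hV1
  set V2 : ℝ → ℝ := fun z => w4 z - k ^ 2 * w2 z with hV2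
  have cV : Continuous V := by fun_prop
  have cV1 : Continuous V1 := by fun_prop
  have cV2 : Continuous V2 := by fun_prop
  have dV : ∀ z, HasDerivAt V (V1 z) z := fun z => (d3 z).sub ((d1 z).const_mul _)
  have dV1 : ∀ z, HasDerivAt V1 (V2 z) z := fun z => (d4 z).sub ((d2 z).const_mul _)
  have V0 : V 0 = 0 := by simp [hV, b0, e0]
  have V1' : V 1 = 0 := by simp [hV, b1, e1]
  have hode : ∀ z ∈ Set.uIcc (0:ℝ) 1, V2 z - k ^ 2 * V z = R * k ^ 2 * T z := by
    intro z hz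
    rw [Set.uIcc_of_le zero_le_one] at hz
    rw [← ode z hz]; simp only [hV, hV2]; ring
  refine ⟨∫ z in (0:ℝ)..1, (V z) ^ 2,
    intervalIntegral.integral_nonneg zero_le_one (fun z _ => sq_nonneg _), ?_, ?_, ?_⟩
  · have h1 : ∫ z in (0:ℝ)..1, (w z * V2 z - w2 z * V z)
        = (w 1 * V1 1 - w1 1 * V 1) - (w 0 * V1 0 - w1 0 * V 0) := by
      apply ftc (F := fun z => w z * V1 z - w1 z * V z) _ (by fun_prop)
      intro z
      exact (((d1 z).mul (dV1 z)).sub ((d2 z).mul (dV z))).congr_deriv (by ring)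
    rw [b0, b1, V0, V1'] at h1
    rw [← intervalIntegral.integral_const_mul]
    have h2 : ∫ z in (0:ℝ)..1, R * k ^ 2 * (w z * T z)
        = ∫ z in (0:ℝ)..1, ((w z * V2 z - w2 z * V z) + (V z) ^ 2) := by
      apply intervalIntegral.integral_congr
      intro z hz
      have := hode z hz
      simp only
      have h3 : R * k ^ 2 * (w z * T z) = w z * (R * k ^ 2 * T z) := by ring
      rw [h3, ← this]
      simp only [hV]; ring
    rw [h2, intervalIntegral.integral_add (Continuous.intervalIntegrable (by fun_prop) _ _)
      (Continuous.intervalIntegrable (by fun_prop) _ _), h1]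
    ring
  · have h1 : ∫ z in (0:ℝ)..1, (V z * V2 z + (V1 z) ^ 2) = V 1 * V1 1 - V 0 * V1 0 := by
      apply ftc (F := fun z => V z * V1 z) _ (by fun_prop)
      intro z
      exact ((dV z).mul (dV1 z)).congr_deriv (by ring)
    rw [V0, V1'] at h1
    rw [← intervalIntegral.integral_const_mul]
    have h2 : ∫ z in (0:ℝ)..1, ((V z) ^ 2 - R ^ 2 * (T z) ^ 2)
        ≤ ∫ z in (0:ℝ)..1, (2 / k ^ 2) * (V z * V2 z + (V1 z) ^ 2) := by
      apply intervalIntegral.integral_mono_on zero_le_one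
        (Continuous.intervalIntegrable (by fun_prop) _ _)
        (Continuous.intervalIntegrable (by fun_prop) _ _)
      intro z hz
      have := hode z (by rwa [Set.uIcc_of_le zero_le_one])
      have h3 : V2 z = R * k ^ 2 * T z + k ^ 2 * V z := by linarith
      have h4 : (2 / k ^ 2) * (V z * V2 z + (V1 z) ^ 2)
          = 2 * R * T z * V z + 2 * (V z) ^ 2 + 2 / k ^ 2 * (V1 z) ^ 2 := by
        rw [h3]; field_simp
      rw [h4]
      have h5 : 0 ≤ 2 / k ^ 2 * (V1 z) ^ 2 := by positivity
      nlinarith [sq_nonneg (V z + R * T z)]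
    rw [intervalIntegral.integral_const_mul, h1,
      intervalIntegral.integral_sub (Continuous.intervalIntegrable (by fun_prop) _ _)
      (Continuous.intervalIntegrable (by fun_prop) _ _)] at h2
    linarith
  · intro z hz
    obtain ⟨z0, hz0, h0⟩ : ∃ z0 ∈ Set.Ioo (0:ℝ) 1, w1 z0 = 0 := by
      obtain ⟨c, hc, h⟩ := exists_hasDerivAt_eq_zero (f := w) (f' := w1) zero_lt_one
        c0.continuousOn (b0.trans b1.symm) (fun x _ => d1 x)
      exact ⟨c, hc, h⟩
    refine (sup_bound d2 c2 hk (Set.Ioo_subset_Icc_self hz0) h0 hz).trans ?_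
    have h1 : ∫ z in (0:ℝ)..1, (w z * w2 z + (w1 z) ^ 2) = w 1 * w1 1 - w 0 * w1 0 := by
      apply ftc (F := fun z => w z * w1 z) _ (by fun_prop)
      intro z
      exact ((d1 z).mul (d2 z)).congr_deriv (by ring)
    rw [b0, b1] at h1
    have h2 : ∫ z in (0:ℝ)..1, ((w2 z) ^ 2 + k ^ 2 * (w1 z) ^ 2)
        ≤ ∫ z in (0:ℝ)..1, ((V z) ^ 2 + (2 * k ^ 2) * (w z * w2 z + (w1 z) ^ 2)) := by
      apply intervalIntegral.integral_mono_on zero_le_one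
        (Continuous.intervalIntegrable (by fun_prop) _ _)
        (Continuous.intervalIntegrable (by fun_prop) _ _)
      intro z hz
      simp only [hV]
      nlinarith [sq_nonneg (k * w1 z), sq_nonneg (k ^ 2 * w z)]
    rw [intervalIntegral.integral_add (f := fun z => (V z) ^ 2)
      (Continuous.intervalIntegrable (by fun_prop) _ _)
      (Continuous.intervalIntegrable (by fun_prop) _ _), intervalIntegral.integral_const_mul,
      h1] at h2
    linarith

end SF

namespace SF

lemma mono01 {f : ℝ → ℝ} (hf : Continuous f) {a b : ℝ} (ha : 0 ≤ a) (hab : a ≤ b) (hb : b ≤ 1) :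
    ∫ z in a..b, (f z) ^ 2 ≤ ∫ z in (0:ℝ)..1, (f z) ^ 2 :=
  intervalIntegral.integral_mono_interval ha hab hb
    (Filter.Eventually.of_forall fun z => by simp only [Pi.zero_apply]; positivity)
    (Continuous.intervalIntegrable (by fun_prop) _ _)

lemma sq_le_lip {f f1 : ℝ → ℝ} (h : ∀ z, HasDerivAt f (f1 z) z) (hf : Continuous f1) {a b Y : ℝ}
    (hab : a ≤ b) (hY : ∀ z ∈ Set.Icc a b, (f1 z) ^ 2 ≤ Y) :
    (f b - f a) ^ 2 ≤ (b - a) ^ 2 * Y := by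
  refine (incr h hf hab).trans ?_
  have h1 : ∫ z in a..b, (f1 z) ^ 2 ≤ ∫ z in a..b, Y :=
    intervalIntegral.integral_mono_on hab (Continuous.intervalIntegrable (by fun_prop) _ _)
      (Continuous.intervalIntegrable (by fun_prop) _ _) hY
  rw [intervalIntegral.integral_const, smul_eq_mul] at h1
  calc _ ≤ (b - a) * ((b - a) * Y) := mul_le_mul_of_nonneg_left h1 (sub_nonneg.mpr hab)
    _ = _ := by ring

lemma pointwise {c C W T d Y I s : ℝ} (hc : |c| ≤ C) (hs : 0 < s) (hW : W ^ 2 ≤ d ^ 2 * Y)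
    (hT : T ^ 2 ≤ d * I) : -(C * (d ^ 2 * Y / (2 * s) + s * d * I / 2)) ≤ c * W * T := by
  have h1 : |W * T| ≤ W ^ 2 / (2 * s) + s * T ^ 2 / 2 := by
    have e : W ^ 2 / (2 * s) + s * T ^ 2 / 2 = (W ^ 2 + s ^ 2 * T ^ 2) / (2 * s) := by
      field_simp
    rw [e, le_div_iff₀ (by positivity), abs_mul]
    nlinarith [sq_nonneg (|W| - s * |T|), sq_abs W, sq_abs T]
  have h2 : W ^ 2 / (2 * s) + s * T ^ 2 / 2 ≤ d ^ 2 * Y / (2 * s) + s * d * I / 2 := by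
    have := div_le_div_of_nonneg_right hW (by positivity : (0:ℝ) ≤ 2 * s)
    have := mul_le_mul_of_nonneg_left hT hs.le
    linarith
  have h3 : |c * W * T| ≤ C * (d ^ 2 * Y / (2 * s) + s * d * I / 2) := by
    rw [mul_assoc, abs_mul]
    exact mul_le_mul hc (h1.trans h2) (abs_nonneg _) ((abs_nonneg _).trans hc)
  exact (abs_le.mp h3).1

lemma polyint (C Y I s a b : ℝ) :
    ∫ z in a..b, C * (z ^ 2 * Y / (2 * s) + s * z * I / 2)
      = C * (b ^ 3 * Y / (6 * s) + s * b ^ 2 * I / 4)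
        - C * (a ^ 3 * Y / (6 * s) + s * a ^ 2 * I / 4) := by
  apply ftc (F := fun z => C * (z ^ 3 * Y / (6 * s) + s * z ^ 2 * I / 4)) _ (by fun_prop)
  intro z
  have h3 : HasDerivAt (fun z : ℝ => z ^ 3) (3 * z ^ 2) z := by simpa using hasDerivAt_pow 3 z
  have h2 : HasDerivAt (fun z : ℝ => z ^ 2) (2 * z) z := by simpa using hasDerivAt_pow 2 z
  exact ((((h3.mul_const Y).div_const (6 * s)).add
    (((h2.const_mul s).mul_const I).div_const 4)).const_mul C).congr_deriv (by ring)

lemma polyint_top (C Y I s e : ℝ) :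
    ∫ z in (1 - e)..1, C * ((1 - z) ^ 2 * Y / (2 * s) + s * (1 - z) * I / 2)
      = C * (e ^ 3 * Y / (6 * s) + s * e ^ 2 * I / 4) := by
  rw [intervalIntegral.integral_comp_sub_left
    (fun z => C * (z ^ 2 * Y / (2 * s) + s * z * I / 2)) 1, polyint]
  ring

lemma params {R q δ A k : ℝ} (hR : 0 < R) (hq : 0 < q) (hk : 0 < k)
    (hδ : δ = 81/100 * q ^ 8) (hA : A = 27/100 * q ^ 9)
    (hδle : δ ≤ ((2:ℝ)^49 * 5^3 / 3^30) ^ ((2:ℝ)/29) * R ^ (-(40:ℝ)/29)) :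
    297/1000 * δ ^ 2 * R ^ 2 * k ≤ 3142/10000 * δ * k ^ 4 + A * R := by
  have hδ0 : 0 < δ := by rw [hδ]; positivity
  have hA0 : 0 < A := by rw [hA]; positivity
  have h1 : R ^ 40 * δ ^ 29 ≤ ((2:ℝ)^49 * 5^3 / 3^30) ^ 2 := by
    have h := pow_le_pow_left₀ hδ0.le hδle 29
    have e1 : (((2:ℝ)^49 * 5^3 / 3^30) ^ ((2:ℝ)/29)) ^ 29 = ((2:ℝ)^49 * 5^3 / 3^30) ^ 2 := by
      rw [← Real.rpow_natCast, ← Real.rpow_mul (by positivity),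
        ← Real.rpow_natCast ((2:ℝ)^49 * 5^3 / 3^30) 2]
      congr 1
      norm_num
    have e2 : (R ^ (-(40:ℝ)/29)) ^ 29 = (R ^ 40)⁻¹ := by
      rw [← Real.rpow_natCast, ← Real.rpow_mul hR.le, ← Real.rpow_natCast R 40,
        ← Real.rpow_neg hR.le]
      congr 1
      norm_num
    rw [mul_pow, e1, e2, ← div_eq_mul_inv, le_div_iff₀ (by positivity)] at h
    linarith
  have h2 : R ^ 5 * q ^ 29 ≤ 10 := by
    have h3 : (R ^ 5 * q ^ 29) ^ 8 ≤ 10 ^ 8 := by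
      rw [hδ] at h1
      have e : R ^ 40 * (81 / 100 * q ^ 8) ^ 29 = (81/100) ^ 29 * (R ^ 5 * q ^ 29) ^ 8 := by ring
      rw [e] at h1
      have : ((2:ℝ)^49 * 5^3 / 3^30) ^ 2 ≤ (81/100) ^ 29 * 10 ^ 8 := by norm_num
      exact le_of_mul_le_mul_left (h1.trans this) (by positivity)
    exact (pow_le_pow_iff_left₀ (by positivity) (by norm_num) (by norm_num)).mp h3
  set b := 3142/10000 * δ with hb
  have hb0 : 0 < b := by positivity
  obtain ⟨k0, hk0, hk04⟩ : ∃ k0 : ℝ, 0 < k0 ∧ b * k0 ^ 4 = A * R / 3 := by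
    refine ⟨√√(A * R / (3 * b)), by positivity, ?_⟩
    have : √√(A * R / (3 * b)) ^ 4 = A * R / (3 * b) := by
      have e : √√(A * R / (3 * b)) ^ 4 = (√√(A * R / (3 * b)) ^ 2) ^ 2 := by ring
      rw [e, Real.sq_sqrt (by positivity), Real.sq_sqrt (by positivity)]
    rw [this]; field_simp
  have h3 : 297/1000 * δ ^ 2 * R ^ 2 ≤ 4 * b * k0 ^ 3 := by
    refine (pow_le_pow_iff_left₀ (n := 4) (by positivity) (by positivity) (by norm_num)).mp ?_
    have e1 : (4 * b * k0 ^ 3) ^ 4 = 256 * b * (b * k0 ^ 4) ^ 3 := by ring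
    rw [e1, hk04, hb, hδ, hA]
    have e2 : (297 / 1000 * (81 / 100 * q ^ 8) ^ 2 * R ^ 2) ^ 4
        = (297/1000) ^ 4 * (81/100) ^ 8 * (q ^ 35 * R ^ 3) * (R ^ 5 * q ^ 29) := by ring
    have e3 : 256 * (3142 / 10000 * (81 / 100 * q ^ 8)) * (27 / 100 * q ^ 9 * R / 3) ^ 3
        = 256 * (3142/10000) * (81/100) * (9/100) ^ 3 * (q ^ 35 * R ^ 3) := by ring
    rw [e2, e3]
    have hp : 0 < q ^ 35 * R ^ 3 := by positivity
    calc _ ≤ (297/1000) ^ 4 * (81/100) ^ 8 * (q ^ 35 * R ^ 3) * 10 := by gcongr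
      _ ≤ _ := by
        set p := q ^ 35 * R ^ 3
        nlinarith
  have h4 : 4 * k0 ^ 3 * k - 3 * k0 ^ 4 ≤ k ^ 4 := by
    nlinarith [mul_nonneg (sq_nonneg (k - k0)) (add_nonneg (sq_nonneg (k + k0)) (sq_nonneg k0)),
      sq_nonneg (k - k0), mul_nonneg (sq_nonneg (k - k0)) (mul_pos hk hk0).le,
      mul_nonneg (sq_nonneg (k - k0)) (sq_nonneg k0)]
  have h5 := mul_le_mul_of_nonneg_left h4 hb0.le
  have h6 := mul_le_mul_of_nonneg_right h3 hk.le
  nlinarith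

lemma hasDerivAt_iter {w : ℝ → ℝ} (hw : ContDiff ℝ 4 w) (n : ℕ) (hn : n < 4) (z : ℝ) :
    HasDerivAt (iteratedDeriv n w) (iteratedDeriv (n + 1) w z) z := by
  rw [iteratedDeriv_succ]
  exact (hw.differentiable_iteratedDeriv n (by exact_mod_cast hn) z).hasDerivAt

end SF

set_option maxHeartbeats 1000000 in
/-- The stress-free spectral constraint `S_k ≥ 0` holds for the paper's background profile
when `δ = (81/100)ε⁴`, `A = δε^{1/2}/3`, `δ ≤ (2⁴⁹·5³/3³⁰)^{2/29} R^{-40/29}` and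
`β ≥ 2√2 δ/9`. -/
theorem stress_free_spectral_constraint
    (R ε δ A β : ℝ) (hR : 0 < R) (hε : ε ∈ Set.Ioc (0:ℝ) (1/3))
    (hδdef : δ = (81/100) * ε^4)
    (hAdef : A = δ * ε ^ ((1:ℝ)/2) / 3)
    (hδle : δ ≤ ((2:ℝ)^49 * 5^3 / 3^30) ^ ((2:ℝ)/29) * R ^ (-(40:ℝ)/29))
    (hβ : β ≥ 2 * Real.sqrt 2 * δ / 9)
    (τ' : ℝ → ℝ)
    (hτ1 : ∀ z ∈ Set.Ioo (0:ℝ) δ, τ' z = -1 / δ)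
    (hτ2 : ∀ z ∈ Set.Ioo δ (1-ε), τ' z = A)
    (hτ3 : ∀ z ∈ Set.Ioo (1-ε) (1:ℝ), τ' z = -((A/ε) * (1-ε-δ) * (1-ε)) / z^2) :
    ∀ k : ℝ, 0 < k → ∀ w T : ℝ → ℝ, ContDiff ℝ 4 w → ContDiff ℝ 1 T →
      (∀ z ∈ Set.Icc (0:ℝ) 1,
        iteratedDeriv 4 w z - 2 * k^2 * iteratedDeriv 2 w z + k^4 * w z = R * k^2 * T z) →
      w 0 = 0 → w 1 = 0 → iteratedDeriv 2 w 0 = 0 → iteratedDeriv 2 w 1 = 0 →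
      T 0 = 0 → T 1 = 0 →
      0 ≤ ∫ z in (0:ℝ)..1,
        (β * (deriv T z)^2 + β * k^2 * (T z)^2 + τ' z * w z * T z) := by

  intro k hk w T hw hT ode w0 w1 v0 v1 T0 T1
  obtain ⟨hε0, hε1⟩ := hε
  obtain ⟨q, hq, hqε, hqA⟩ : ∃ q : ℝ, 0 < q ∧ ε = q ^ 2 ∧ ε ^ ((1:ℝ)/2) = q :=
    ⟨√ε, Real.sqrt_pos.mpr hε0, (Real.sq_sqrt hε0.le).symm, (Real.sqrt_eq_rpow ε).symm⟩
  have hδ : δ = 81/100 * q ^ 8 := by rw [hδdef, hqε]; ring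
  have hA : A = 27/100 * q ^ 9 := by rw [hAdef, hqA, hδ]; ring
  have hδ0 : 0 < δ := by rw [hδ]; positivity
  have hA0 : 0 < A := by rw [hA]; positivity
  have hδ1 : δ ≤ 1/100 := by
    rw [hδdef]
    have := pow_le_pow_left₀ hε0.le hε1 4
    norm_num at this ⊢
    linarith
  have hA1 : A ≤ 1/500 := by
    have hq1 : q ≤ 6/10 := by nlinarith
    have e : A = δ * q / 3 := by rw [hA, hδ]; ring
    rw [e]; nlinarith
  have hAδ : A * δ ≤ 2/100000 := by nlinarith
  have hβ' : 3142/10000 * δ ≤ β := by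
    have : (1414/1000 : ℝ) ≤ √2 := Real.le_sqrt_of_sq_le (by norm_num)
    nlinarith
  have hpar := SF.params hR hq hk hδ hA hδle
  have d := SF.hasDerivAt_iter hw
  have d1 : ∀ z, HasDerivAt w (iteratedDeriv 1 w z) z := by
    have := d 0 (by norm_num)
    simpa only [iteratedDeriv_zero, zero_add] using this
  have d2 := d 1 (by norm_num)
  have d3 := d 2 (by norm_num)
  have d4 := d 3 (by norm_num)
  have c4 : Continuous (iteratedDeriv 4 w) := hw.continuous_iteratedDeriv 4 le_rfl
  have c1 : Continuous (iteratedDeriv 1 w) := hw.continuous_iteratedDeriv 1 (by norm_num)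
  have cw : Continuous w := hw.continuous
  have cT : Continuous T := hT.continuous
  have cT1 : Continuous (deriv T) := hT.continuous_deriv le_rfl
  have dT : ∀ z, HasDerivAt T (deriv T z) z := fun z =>
    (hT.differentiable (by norm_num) z).hasDerivAt
  obtain ⟨X, hX0, hXK, hXJ, hXw⟩ := SF.energy hk d1 d2 d3 d4 c4 cT ode w0 w1 v0 v1
  set Y := X / k with hY
  have hYw : ∀ z ∈ Set.Icc (0:ℝ) 1, (iteratedDeriv 1 w z) ^ 2 ≤ Y := by
    intro z hz
    rw [hY, le_div_iff₀ hk]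
    linarith [hXw z hz]
  set I := ∫ z in (0:ℝ)..1, (deriv T z) ^ 2 with hI
  set J := ∫ z in (0:ℝ)..1, (T z) ^ 2 with hJ
  set K := ∫ z in (0:ℝ)..1, w z * T z with hK
  have hI0 : 0 ≤ I := intervalIntegral.integral_nonneg zero_le_one (fun z _ => sq_nonneg _)
  have hJ0 : 0 ≤ J := intervalIntegral.integral_nonneg zero_le_one (fun z _ => sq_nonneg _)
  have wl : ∀ z ∈ Set.Icc (0:ℝ) 1, (w z) ^ 2 ≤ z ^ 2 * Y := by
    intro z hz
    have := SF.sq_le_lip d1 c1 hz.1 (fun y hy => hYw y ⟨hy.1, hy.2.trans hz.2⟩)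
    simpa [w0] using this
  have wr : ∀ z ∈ Set.Icc (0:ℝ) 1, (w z) ^ 2 ≤ (1 - z) ^ 2 * Y := by
    intro z hz
    have := SF.sq_le_lip d1 c1 hz.2 (fun y hy => hYw y ⟨hz.1.trans hy.1, hy.2⟩)
    simpa [w1] using this
  have Tl : ∀ z ∈ Set.Icc (0:ℝ) 1, (T z) ^ 2 ≤ z * I := by
    intro z hz
    have h := SF.incr dT cT1 hz.1
    have h' := mul_le_mul_of_nonneg_left (SF.mono01 cT1 le_rfl hz.1 hz.2) hz.1
    rw [T0, sub_zero, sub_zero] at h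
    exact h.trans h'
  have Tr : ∀ z ∈ Set.Icc (0:ℝ) 1, (T z) ^ 2 ≤ (1 - z) * I := by
    intro z hz
    have h := SF.incr dT cT1 hz.2
    have h' := mul_le_mul_of_nonneg_left (SF.mono01 cT1 hz.1 hz.2 le_rfl) (sub_nonneg.mpr hz.2)
    rw [T1, zero_sub, neg_sq] at h
    exact h.trans h'
  set F : ℝ → ℝ := fun z => β * (deriv T z)^2 + β * k^2 * (T z)^2 + τ' z * w z * T z with hF
  set G : ℝ → ℝ := fun z => β * (deriv T z)^2 + β * k^2 * (T z)^2 + A * (w z * T z) with hG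
  by_cases hint : IntervalIntegrable F volume 0 1
  swap
  · rw [intervalIntegral.integral_undef hint]
  have cG : Continuous G := by fun_prop
  have iG : ∀ a b, IntervalIntegrable G volume a b := fun a b => cG.intervalIntegrable a b
  have hGint : ∫ z in (0:ℝ)..1, G z = β * I + β * k ^ 2 * J + A * K := by
    simp only [hG]
    rw [intervalIntegral.integral_add (Continuous.intervalIntegrable (by fun_prop) _ _)
      (Continuous.intervalIntegrable (by fun_prop) _ _),
      intervalIntegral.integral_add (Continuous.intervalIntegrable (by fun_prop) _ _)
      (Continuous.intervalIntegrable (by fun_prop) _ _),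
      intervalIntegral.integral_const_mul, intervalIntegral.integral_const_mul,
      intervalIntegral.integral_const_mul]
  have hle1 : δ ≤ 1 - ε := by linarith
  have iF : ∀ a b, 0 ≤ a → a ≤ b → b ≤ 1 → IntervalIntegrable F volume a b := by
    intro a b ha hab hb
    apply hint.mono_set
    rw [Set.uIcc_of_le hab, Set.uIcc_of_le zero_le_one]
    exact Set.Icc_subset_Icc ha hb
  have iF1 := iF 0 δ le_rfl hδ0.le (by linarith)
  have iF2 := iF δ (1 - ε) hδ0.le hle1 (by linarith)
  have iF3 := iF (1 - ε) 1 (by linarith) (by linarith) le_rfl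
  set s1 : ℝ := 84/100 with hs1
  set s2 : ℝ := 93/100 / q ^ 3 with hs2
  have hs2p : 0 < s2 := by positivity
  set CB : ℝ := 1 / δ + A with hCB
  set CT : ℝ := A / ε * (1 + ε) with hCT
  have hbot : (∫ z in (0:ℝ)..δ, G z) - CB * (δ ^ 3 * Y / (6 * s1) + s1 * δ ^ 2 * I / 4)
      ≤ ∫ z in (0:ℝ)..δ, F z := by
    have e := SF.polyint CB Y I s1 0 δ
    have e' : (∫ z in (0:ℝ)..δ, G z) - CB * (δ ^ 3 * Y / (6 * s1) + s1 * δ ^ 2 * I / 4)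
        = ∫ z in (0:ℝ)..δ, (G z - CB * (z ^ 2 * Y / (2 * s1) + s1 * z * I / 2)) := by
      rw [intervalIntegral.integral_sub (iG _ _)
        (Continuous.intervalIntegrable (by fun_prop) _ _), e]
      ring
    rw [e']
    apply intervalIntegral.integral_mono_on_of_le_Ioo hδ0.le
      (Continuous.intervalIntegrable (by fun_prop) _ _) iF1
    intro z hz
    have hz' : z ∈ Set.Icc (0:ℝ) 1 := ⟨hz.1.le, by linarith [hz.2]⟩
    have hc : |τ' z - A| ≤ CB := by
      rw [hτ1 z hz, abs_le, hCB]
      have : 0 < 1 / δ := by positivity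
      have h : -1 / δ = - (1 / δ) := by ring
      rw [h]
      constructor <;> linarith
    have := SF.pointwise hc (by norm_num : (0:ℝ) < s1) (wl z hz') (Tl z hz')
    have e2 : (τ' z - A) * w z * T z = τ' z * w z * T z - A * (w z * T z) := by ring
    rw [e2] at this
    simp only [hF, hG]
    linarith
  have hmid : ∫ z in δ..(1 - ε), G z ≤ ∫ z in δ..(1 - ε), F z := by
    apply intervalIntegral.integral_mono_on_of_le_Ioo hle1 (iG _ _) iF2
    intro z hz
    simp only [hF, hG, hτ2 z hz]
    linarith
  have htop : (∫ z in (1 - ε)..1, G z) - CT * (ε ^ 3 * Y / (6 * s2) + s2 * ε ^ 2 * I / 4)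
      ≤ ∫ z in (1 - ε)..1, F z := by
    have e := SF.polyint_top CT Y I s2 ε
    have e' : (∫ z in (1 - ε)..1, G z) - CT * (ε ^ 3 * Y / (6 * s2) + s2 * ε ^ 2 * I / 4)
        = ∫ z in (1 - ε)..1,
          (G z - CT * ((1 - z) ^ 2 * Y / (2 * s2) + s2 * (1 - z) * I / 2)) := by
      rw [intervalIntegral.integral_sub (iG _ _)
        (Continuous.intervalIntegrable (by fun_prop) _ _), e]
    rw [e']
    apply intervalIntegral.integral_mono_on_of_le_Ioo (by linarith)
      (Continuous.intervalIntegrable (by fun_prop) _ _) iF3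
    intro z hz
    have hz0 : 0 < z := by linarith [hz.1]
    have hz' : z ∈ Set.Icc (0:ℝ) 1 := ⟨hz0.le, hz.2.le⟩
    have hc : |τ' z - A| ≤ CT := by
      have hAε : 0 < A / ε := by positivity
      have hB0 : 0 ≤ (A / ε) * (1 - ε - δ) * (1 - ε) :=
        mul_nonneg (mul_nonneg hAε.le (by linarith)) (by linarith)
      have hB1 : (A / ε) * (1 - ε - δ) * (1 - ε) / z ^ 2 ≤ A / ε := by
        rw [div_le_iff₀ (by positivity), mul_assoc]
        apply mul_le_mul_of_nonneg_left _ hAε.le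
        calc (1 - ε - δ) * (1 - ε) ≤ z * z :=
              mul_le_mul (by linarith [hz.1]) hz.1.le (by linarith) hz0.le
          _ = z ^ 2 := by ring
      have hB2 : 0 ≤ (A / ε) * (1 - ε - δ) * (1 - ε) / z ^ 2 := by positivity
      have hCT' : CT = A / ε + A := by rw [hCT]; field_simp
      rw [hτ3 z hz, abs_le, hCT', neg_div]
      constructor <;> linarith
    have := SF.pointwise hc hs2p (wr z hz') (Tr z hz')
    have e2 : (τ' z - A) * w z * T z = τ' z * w z * T z - A * (w z * T z) := by ring
    rw [e2] at this
    simp only [hF, hG]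
    linarith
  have hsplitF : ∫ z in (0:ℝ)..1, F z
      = (∫ z in (0:ℝ)..δ, F z) + (∫ z in δ..(1 - ε), F z) + ∫ z in (1 - ε)..1, F z := by
    rw [intervalIntegral.integral_add_adjacent_intervals iF1 iF2,
      intervalIntegral.integral_add_adjacent_intervals (iF1.trans iF2) iF3]
  have hsplitG : ∫ z in (0:ℝ)..1, G z
      = (∫ z in (0:ℝ)..δ, G z) + (∫ z in δ..(1 - ε), G z) + ∫ z in (1 - ε)..1, G z := by
    rw [intervalIntegral.integral_add_adjacent_intervals (iG _ _) (iG _ _),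
      intervalIntegral.integral_add_adjacent_intervals (iG _ _) (iG _ _)]
  have hCBδ : CB * δ = 1 + A * δ := by rw [hCB]; field_simp
  have hIc : CB * (s1 * δ ^ 2 / 4) + CT * (s2 * ε ^ 2 / 4) ≤ 3142/10000 * δ := by
    have t1 : CB * (s1 * δ ^ 2 / 4) = (1 + A * δ) * (21/100) * δ := by
      rw [← hCBδ, hs1]; ring
    have t2 : CT * (s2 * ε ^ 2 / 4) = (1 + ε) * (93/1200) * δ := by
      rw [hCT, hs2, hA, hδ]
      have : q ≠ 0 := hq.ne'
      rw [hqε]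
      field_simp
      ring
    rw [t1, t2]
    have a1 := mul_le_mul_of_nonneg_right hAδ hδ0.le
    have a2 := mul_le_mul_of_nonneg_right hε1 hδ0.le
    linarith
  have hYc : CB * (δ ^ 3 / (6 * s1)) + CT * (ε ^ 3 / (6 * s2)) ≤ 297/1000 * δ ^ 2 := by
    have t1 : CB * (δ ^ 3 / (6 * s1)) = (1 + A * δ) * (100/504) * δ ^ 2 := by
      rw [← hCBδ, hs1]; ring
    have t2 : CT * (ε ^ 3 / (6 * s2)) = (1 + ε) * (27 / (81 * 81 * 558) * 10000) * δ ^ 2 := by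
      rw [hCT, hs2, hA, hδ]
      have : q ≠ 0 := hq.ne'
      rw [hqε]
      field_simp
      ring
    rw [t1, t2]
    have h : 0 < δ ^ 2 := by positivity
    have a1 := mul_le_mul_of_nonneg_right hAδ h.le
    have a2 := mul_le_mul_of_nonneg_right hε1 h.le
    linarith
  have hY0 : 0 ≤ Y := by positivity
  have hIc' := mul_le_mul_of_nonneg_right hIc hI0
  have hYc' := mul_le_mul_of_nonneg_right hYc hY0
  have hβI := mul_le_mul_of_nonneg_right hβ' hI0
  have hβJ : 3142/10000 * δ * k ^ 2 * J ≤ β * k ^ 2 * J := by gcongr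
  have hfin : 297/1000 * δ ^ 2 * Y ≤ 3142/10000 * δ * k ^ 2 * J + A * K := by
    have hJX : X / R ^ 2 ≤ J := by
      rw [div_le_iff₀ (by positivity)]; linarith
    have hKX : K = X / (R * k ^ 2) := by
      rw [eq_div_iff (by positivity)]; linarith
    have t : 3142/10000 * δ * k ^ 2 * (X / R ^ 2) ≤ 3142/10000 * δ * k ^ 2 * J := by gcongr
    refine le_trans ?_ (add_le_add_left t _)
    rw [hKX, hY]
    have u := mul_le_mul_of_nonneg_right hpar
      (by positivity : 0 ≤ X / (R ^ 2 * k ^ 2))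
    have u1 : 297 / 1000 * δ ^ 2 * R ^ 2 * k * (X / (R ^ 2 * k ^ 2))
      = 297/1000 * δ ^ 2 * (X / k) := by field_simp
    have u2 : (3142 / 10000 * δ * k ^ 4 + A * R) * (X / (R ^ 2 * k ^ 2))
      = 3142/10000 * δ * k ^ 2 * (X / R ^ 2) + A * (X / (R * k ^ 2)) := by field_simp
    rw [u1, u2] at u
    exact u
  have hexp : CB * (δ ^ 3 * Y / (6 * s1) + s1 * δ ^ 2 * I / 4)
      + CT * (ε ^ 3 * Y / (6 * s2) + s2 * ε ^ 2 * I / 4)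
      = (CB * (s1 * δ ^ 2 / 4) + CT * (s2 * ε ^ 2 / 4)) * I
        + (CB * (δ ^ 3 / (6 * s1)) + CT * (ε ^ 3 / (6 * s2))) * Y := by ring
  linarith
end
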